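/- arXiv:1610.03301 — 2 statements merged into one kernel-verified Lean document; each statement's English description precedes it below -/
import Mathlib

section
/- The sequence k ↦ (Nat.card {p : Equiv.Perm (Fin k) × Equiv.Perm (Fin k) // G_c(p.1, p.2) = (alternatingGroup (Fin k)).prod (alternatingGroup (Fin k))} : ℝ) / (k !)^2 tends to 1/4 as k → ∞; that is, the group circularly generated by a pair of uniformly random permutations of k points equals A_k × A_k with probability tending to 1/4. -/
/-- The group circularly generated by a pair `(σ, τ)` of permutations: the subgroup
of `Equiv.Perm (Fin k) × Equiv.Perm (Fin k)` generated by `(σ, τ)` and `(τ, σ)`. -/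
def circGenPair {k : ℕ} (σ τ : Equiv.Perm (Fin k)) :
    Subgroup (Equiv.Perm (Fin k) × Equiv.Perm (Fin k)) :=
  Subgroup.closure {(σ, τ), (τ, σ)}


section PartA
open Equiv Equiv.Perm MulAction

theorem comm_isThreeCycle {α : Type*} [Fintype α] [DecidableEq α] {a b : Perm α} {x : α}
    (h : ∀ y, (a y ≠ y ∧ b y ≠ y) ↔ y = x) : IsThreeCycle (a * b * a⁻¹ * b⁻¹) := by
  have hx := (h x).2 rfl
  have key : ∀ y, y ≠ x → a y = y ∨ b y = y := by
    intro y hy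
    by_contra hc
    push Not at hc
    exact hy ((h y).1 hc)
  have hax : b (a x) = a x := by
    rcases key (a x) hx.1 with h1 | h1
    · exact absurd (a.injective h1) hx.1
    · exact h1
  have hbx : a (b x) = b x := by
    rcases key (b x) hx.2 with h1 | h1
    · exact h1
    · exact absurd (b.injective h1) hx.2
  have hab : a x ≠ b x := by
    intro he
    rw [← he] at hbx
    exact hx.1 (a.injective hbx)
  have : a * b * a⁻¹ * b⁻¹ = swap x (b x) * swap x (a x) := by
    rw [mul_inv_eq_iff_eq_mul, mul_inv_eq_iff_eq_mul]
    ext y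
    simp only [Perm.mul_apply]
    have ia := fun u v => a.injective.eq_iff (a := u) (b := v)
    have ib := fun u v => b.injective.eq_iff (a := u) (b := v)
    rw [swap_apply_def x (a x)]
    rw [swap_apply_def x (b x)]
    have k1 := key y
    have k2 := key (a y)
    have k3 := key (b y)
    have i1 := ia (a y) y
    have i2 := ib (b y) y
    have i3 := ia y x
    have i4 := ib y x
    have i5 := ib (a y) (a x)
    clear ia ib h key
    by_cases c1 : a y = x
    · grind
    · by_cases c2 : b y = x
      · grind
      · by_cases c3 : y = x
        · grind
        · grind
  rw [this]
  exact isThreeCycle_swap_mul_swap_same hx.2.symm hx.1.symm hab.symm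

open Pointwise in
theorem jordan_prime {α : Type*} [Fintype α] [DecidableEq α] {G : Subgroup (Perm α)}
    (hG : IsPreprimitive G α) {p : ℕ} (hp : p.Prime) (hp' : 2 * p ≤ Nat.card α)
    {g : Perm α} (hgc : g.IsCycle) (hgp : g.support.card = p)
    (hg : g ∈ G) : alternatingGroup α ≤ G := by
  classical
  have h2 := hp.two_le
  obtain ⟨n, hn⟩ : ∃ n, Nat.card α - p = n + 1 := ⟨Nat.card α - p - 1, by omega⟩
  have hM : IsMultiplyPreprimitive G α (n + 2) := by
    apply hG.isMultiplyPreprimitive (s := (g.supportᶜ : Set α))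
    · apply Nat.add_left_cancel
      rw [Set.ncard_add_ncard_compl, Set.ncard_coe_finset, hgp, ← hn]
      omega
    · omega
    have := isPretransitive_of_isCycle_mem hgc hg
    apply IsPreprimitive.of_prime_card
    convert! hp
    rw [Nat.card_eq_fintype_card, Fintype.card_subtype, ← hgp]
    apply congr_arg
    ext x
    simp [SubMulAction.mem_ofFixingSubgroup_iff]
  have hT : IsMultiplyPretransitive G α (n + 2) := hM.isMultiplyPretransitive
  have hT' : IsMultiplyPretransitive G α p := by
    apply MulAction.isMultiplyPretransitive_of_le' (n := n + 2)
    · omega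
    · rw [ENat.card_eq_coe_natCard]
      norm_cast
      omega
  obtain ⟨x, hx⟩ : g.support.Nonempty := by
    rw [← Finset.card_pos]; omega
  obtain ⟨u, hu, huc⟩ : ∃ u ⊆ g.supportᶜ, u.card = p - 1 := by
    apply Finset.exists_subset_card_eq
    rw [Finset.card_compl, hgp, ← Nat.card_eq_fintype_card]
    omega
  have hxu : x ∉ u := fun h => by
    have := hu h
    simp at this hx
    exact hx this
  have hcard : (insert x u).card = p := by
    rw [Finset.card_insert_of_notMem hxu]; omega
  let e1 : Fin p ↪ α := (g.support.equivFinOfCardEq hgp).symm.toEmbedding.trans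
    (Function.Embedding.subtype _)
  let e2 : Fin p ↪ α := ((insert x u).equivFinOfCardEq hcard).symm.toEmbedding.trans
    (Function.Embedding.subtype _)
  obtain ⟨γ, hγ⟩ := exists_smul_eq G e1 e2
  have him : ∀ y ∈ g.support, (γ : Perm α) y ∈ insert x u := by
    intro y hy
    have h1 : e1 (g.support.equivFinOfCardEq hgp ⟨y, hy⟩) = y := by
      simp [e1]
    have h2 := congrArg (fun f => f (g.support.equivFinOfCardEq hgp ⟨y, hy⟩)) hγ
    simp only [Function.Embedding.smul_apply, h1] at h2
    have h3 : (γ : Perm α) y = γ • y := rfl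
    rw [h3, h2]
    exact Finset.coe_mem _
  have him' : g.support.map (γ : Perm α).toEmbedding = insert x u := by
    apply Finset.eq_of_subset_of_card_le
    · intro z hz
      rw [Finset.mem_map] at hz
      obtain ⟨y, hy, rfl⟩ := hz
      exact him y hy
    · rw [Finset.card_map, hgp, hcard]
  have h3 : IsThreeCycle (g * ((γ : Perm α) * g * (γ : Perm α)⁻¹) * g⁻¹ * ((γ : Perm α) * g * (γ : Perm α)⁻¹)⁻¹) := by
    apply comm_isThreeCycle (x := x)
    intro y
    rw [← mem_support, ← mem_support, support_conj, him']
    constructor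
    · rintro ⟨h1, h2⟩
      rcases Finset.mem_insert.1 h2 with h | h
      · exact h
      · have := hu h
        rw [Finset.mem_compl] at this
        exact absurd h1 this
    · rintro rfl
      exact ⟨hx, Finset.mem_insert_self _ _⟩
  refine alternatingGroup_le_of_isPreprimitive_of_isThreeCycle_mem hG h3 ?_
  have hc : ((γ : Perm α) * g * (γ : Perm α)⁻¹) ∈ G := G.mul_mem (G.mul_mem γ.2 hg) (G.inv_mem γ.2)
  exact G.mul_mem (G.mul_mem (G.mul_mem hg hc) (G.inv_mem hg)) (G.inv_mem hc)

theorem pow_cycle {α : Type*} [Fintype α] [DecidableEq α] {σ τ c : Perm α} {p : ℕ}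
    (hp : p.Prime) (hc : c ∈ σ.cycleFactorsFinset) (hcp : c.support.card = p)
    (hother : ∀ d ∈ σ.cycleFactorsFinset, d ≠ c → ¬ p ∣ d.support.card)
    (hτ : ∀ d ∈ τ.cycleFactorsFinset, ¬ p ∣ d.support.card) :
    ∃ m : ℕ, (σ ^ m).IsCycle ∧ (σ ^ m).support.card = p ∧ τ ^ m = 1 := by
  have hlcm : ∀ s : Multiset ℕ, (∀ x ∈ s, ¬ p ∣ x) → ¬ p ∣ s.lcm := by
    intro s
    induction s using Multiset.induction with
    | empty => intro _; simpa using hp.one_lt.ne'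
    | cons a s ih =>
      intro h hd
      rw [Multiset.lcm_cons] at hd
      have : p ∣ a * s.lcm := hd.trans (lcm_dvd (dvd_mul_right _ _) (dvd_mul_left _ _))
      rcases hp.dvd_mul.1 this with h1 | h1
      · exact h a (Multiset.mem_cons_self _ _) h1
      · exact ih (fun x hx => h x (Multiset.mem_cons_of_mem hx)) h1
  have hord : ∀ ρ : Perm α, (∀ d ∈ ρ.cycleFactorsFinset, ¬ p ∣ d.support.card) →
      ¬ p ∣ orderOf ρ := by
    intro ρ h
    rw [← lcm_cycleType]
    apply hlcm
    intro x hx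
    rw [cycleType_def, Multiset.mem_map] at hx
    obtain ⟨d, hd, rfl⟩ := hx
    exact h d hd
  have hdis : Disjoint (σ * c⁻¹) c := disjoint_mul_inv_of_mem_cycleFactorsFinset hc
  have hcyc : c.IsCycle := (mem_cycleFactorsFinset_iff.1 hc).1
  have hσ' : ¬ p ∣ orderOf (σ * c⁻¹) := by
    apply hord
    intro d hd
    rw [cycleFactorsFinset_mul_inv_mem_eq_sdiff hc] at hd
    simp only [Finset.mem_sdiff, Finset.mem_singleton] at hd
    exact hother d hd.1 hd.2
  have hm : ¬ p ∣ orderOf (σ * c⁻¹) * orderOf τ := by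
    rw [hp.dvd_mul]
    rintro (h | h)
    · exact hσ' h
    · exact hord τ hτ h
  have e : σ ^ (orderOf (σ * c⁻¹) * orderOf τ) = c ^ (orderOf (σ * c⁻¹) * orderOf τ) := by
    have h0 : σ ^ (orderOf (σ * c⁻¹) * orderOf τ) =
        ((σ * c⁻¹) * c) ^ (orderOf (σ * c⁻¹) * orderOf τ) := by rw [inv_mul_cancel_right]
    rw [h0, hdis.commute.mul_pow]
    rw [pow_mul (σ * c⁻¹), pow_orderOf_eq_one]; simp
  have ho : orderOf c = p := by rw [hcyc.orderOf, hcp]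
  refine ⟨orderOf (σ * c⁻¹) * orderOf τ, ?_, ?_, ?_⟩
  · rw [e, hcyc.pow_iff, ho]
    exact ((Nat.Prime.coprime_iff_not_dvd hp).2 hm).symm
  · rw [e, support_pow_coprime, hcp]
    rw [ho]
    exact ((Nat.Prime.coprime_iff_not_dvd hp).2 hm).symm
  · rw [mul_comm, pow_mul, pow_orderOf_eq_one, one_pow]

theorem circ_of_gen {k : ℕ} (hk : 5 ≤ k) {σ τ c : Perm (Fin k)}
    (hσ : σ ∈ alternatingGroup (Fin k)) (hτ : τ ∈ alternatingGroup (Fin k))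
    (hgen : alternatingGroup (Fin k) ≤ Subgroup.closure {σ, τ})
    (hc : c ≠ 1) (hcm : (c, (1 : Perm (Fin k))) ∈ Subgroup.closure {(σ, τ), (τ, σ)}) :
    Subgroup.closure {(σ, τ), (τ, σ)} =
      (alternatingGroup (Fin k)).prod (alternatingGroup (Fin k)) := by
  set H : Subgroup (Perm (Fin k) × Perm (Fin k)) := Subgroup.closure {(σ, τ), (τ, σ)} with hH
  have hle : H ≤ (alternatingGroup (Fin k)).prod (alternatingGroup (Fin k)) := by
    rw [hH, Subgroup.closure_le]
    rintro x (rfl | rfl)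
    · exact ⟨hσ, hτ⟩
    · exact ⟨hτ, hσ⟩
  have hswap : ∀ x ∈ H, x.swap ∈ H := by
    intro x hx
    have : H ≤ H.comap (MulEquiv.prodComm : Perm (Fin k) × Perm (Fin k) ≃* _).toMonoidHom := by
      conv_lhs => rw [hH]
      rw [Subgroup.closure_le]
      rintro x (rfl | rfl)
      · exact Subgroup.subset_closure (by right; rfl)
      · exact Subgroup.subset_closure (by left; rfl)
    exact this hx
  have hsurj : ∀ a ∈ alternatingGroup (Fin k), ∃ b, (a, b) ∈ H := by
    intro a ha
    have : Subgroup.closure {σ, τ} ≤ H.map (MonoidHom.fst _ _) := by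
      rw [Subgroup.closure_le]
      rintro x (rfl | rfl)
      · exact ⟨(_, τ), Subgroup.subset_closure (by left; rfl), rfl⟩
      · exact ⟨(_, σ), Subgroup.subset_closure (by right; rfl), rfl⟩
    obtain ⟨⟨a', b⟩, hab, rfl⟩ := this (hgen ha)
    exact ⟨b, hab⟩
  let N : Subgroup (alternatingGroup (Fin k)) :=
    H.comap ((MonoidHom.inl _ _).comp (alternatingGroup (Fin k)).subtype)
  have hN : ∀ a : alternatingGroup (Fin k), a ∈ N ↔ ((a : Perm (Fin k)), (1 : Perm (Fin k))) ∈ H :=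
    fun a => Iff.rfl
  have hnorm : N.Normal := by
    constructor
    intro n hn g
    rw [hN] at hn ⊢
    obtain ⟨b, hb⟩ := hsurj g g.2
    have := H.mul_mem (H.mul_mem hb hn) (H.inv_mem hb)
    simpa using this
  have hsimple : IsSimpleGroup (alternatingGroup (Fin k)) :=
    alternatingGroup.isSimpleGroup (by simpa using hk)
  have htop : N = ⊤ := by
    apply hnorm.eq_bot_or_eq_top.resolve_left
    intro hbot
    have h1 : (⟨c, (hle hcm).1⟩ : alternatingGroup (Fin k)) ∈ N := hcm
    rw [hbot, Subgroup.mem_bot] at h1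
    exact hc (congrArg Subtype.val h1)
  have hall : ∀ a ∈ alternatingGroup (Fin k), (a, (1 : Perm (Fin k))) ∈ H := by
    intro a ha
    have : (⟨a, ha⟩ : alternatingGroup (Fin k)) ∈ N := by rw [htop]; trivial
    exact this
  apply le_antisymm hle
  rintro ⟨a, b⟩ ⟨ha, hb⟩
  have h1 := H.mul_mem (hall a ha) (hswap _ (hall b hb))
  simpa using h1

theorem circ_good {k : ℕ} (hk : 5 ≤ k) {σ τ c : Perm (Fin k)} {p : ℕ}
    (hσ : σ ∈ alternatingGroup (Fin k)) (hτ : τ ∈ alternatingGroup (Fin k))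
    (hprim : IsPreprimitive (Subgroup.closure {σ, τ}) (Fin k))
    (hp : p.Prime) (hpk : 2 * p ≤ k) (hc : c ∈ σ.cycleFactorsFinset) (hcp : c.support.card = p)
    (hother : ∀ d ∈ σ.cycleFactorsFinset, d ≠ c → ¬ p ∣ d.support.card)
    (hτp : ∀ d ∈ τ.cycleFactorsFinset, ¬ p ∣ d.support.card) :
    Subgroup.closure {(σ, τ), (τ, σ)} =
      (alternatingGroup (Fin k)).prod (alternatingGroup (Fin k)) := by
  obtain ⟨m, h1, h2, h3⟩ := pow_cycle hp hc hcp hother hτp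
  apply circ_of_gen hk hσ hτ (c := σ ^ m)
  · exact jordan_prime hprim hp (by simpa using hpk) h1 h2
      (Subgroup.pow_mem _ (Subgroup.subset_closure (by left; rfl)) _)
  · exact h1.ne_one
  · have : (σ ^ m, (1 : Perm (Fin k))) = (σ, τ) ^ m := by rw [Prod.pow_mk, h3]
    rw [this]
    exact Subgroup.pow_mem _ (Subgroup.subset_closure (by left; rfl)) _

end PartA

section PartB
open Equiv Equiv.Perm
open scoped Nat

theorem card_agree {α : Type*} [Fintype α] [DecidableEq α] (S : Finset α) (g : Perm α) :
    (Finset.univ.filter (fun σ : Perm α => ∀ x ∈ S, σ x = g x)).card =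
      (Fintype.card α - S.card)! := by
  have h1 : (Finset.univ.filter (fun σ : Perm α => ∀ x ∈ S, σ x = g x)).card =
      (Finset.univ.filter (fun σ : Perm α => ∀ x, ¬ (x ∉ S) → σ x = x)).card := by
    apply Finset.card_bij (fun σ _ => g⁻¹ * σ)
    · intro σ hσ
      simp only [Finset.mem_filter, Finset.mem_univ, true_and, not_not] at hσ ⊢
      intro x hx
      simp [hσ x hx]
    · intro a _ b _ h
      exact mul_left_cancel h
    · intro b hb
      simp only [Finset.mem_filter, Finset.mem_univ, true_and, not_not] at hb ⊢
      refine ⟨g * b, ?_, by simp⟩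
      intro x hx
      simp [hb x hx]
  rw [h1, ← Fintype.card_subtype, ← Fintype.card_congr (Perm.subtypeEquivSubtypePerm (fun x => x ∉ S)),
    Fintype.card_perm]
  congr 1
  rw [Fintype.card_subtype_compl]
  simp

theorem cycleType_singleton_iff {α : Type*} [Fintype α] [DecidableEq α] (c : Perm α) (l : ℕ) :
    c.cycleType = {l} ↔ c.IsCycle ∧ c.support.card = l := by
  constructor
  · intro h
    refine ⟨?_, ?_⟩
    · rw [← card_cycleType_eq_one, h]; simp
    · rw [← sum_cycleType, h]; simp
  · rintro ⟨h, rfl⟩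
    exact h.cycleType

theorem card_cycles_disjoint {α : Type*} [Fintype α] [DecidableEq α] (S : Finset α) (l : ℕ)
    (hl : 2 ≤ l) (hS : S.card + l ≤ Fintype.card α) :
    (Finset.univ.filter (fun c : Perm α => c.cycleType = {l} ∧
      _root_.Disjoint c.support S)).card * (l * (Fintype.card α - S.card - l)!) =
      (Fintype.card α - S.card)! := by
  have hcard : Fintype.card {x // x ∉ S} = Fintype.card α - S.card := by
    rw [Fintype.card_subtype_compl]
    simp
  have h1 : (Finset.univ.filter (fun c : Perm α => c.cycleType = {l} ∧
      _root_.Disjoint c.support S)).card =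
      (Finset.univ.filter (fun c : Perm {x // x ∉ S} => c.cycleType = {l})).card := by
    symm
    apply Finset.card_bij (fun c _ => ofSubtype c)
    · intro c hc
      simp only [Finset.mem_filter, Finset.mem_univ, true_and] at hc ⊢
      have h2 : (ofSubtype c).cycleType = {l} := by rw [cycleType_ofSubtype, hc]
      refine ⟨h2, ?_⟩
      · rw [Finset.disjoint_left]
        intro x hx hxS
        rw [mem_support] at hx
        exact hx (ofSubtype_apply_of_not_mem c (by simpa using hxS))
    · intro a _ b _ h
      exact ofSubtype_injective h
    · intro b hb
      simp only [Finset.mem_filter, Finset.mem_univ, true_and] at hb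
      obtain ⟨h2, h4⟩ := hb
      rw [Finset.disjoint_left] at h4
      have e1 : ∀ x, b x ≠ x → x ∉ S := by
        intro x hx
        exact h4 (mem_support.2 hx)
      have e2 : ∀ x, b x ∉ S ↔ x ∉ S := by
        intro x
        by_cases hx : b x = x
        · rw [hx]
        · exact iff_of_true (e1 _ (fun h => hx (b.injective h))) (e1 x hx)
      have e3 : ofSubtype (b.subtypePerm e2) = b := ofSubtype_subtypePerm e2 e1
      refine ⟨b.subtypePerm e2, ?_, e3⟩
      simp only [Finset.mem_filter, Finset.mem_univ, true_and]
      rw [← cycleType_ofSubtype, e3, h2]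
  rw [h1, card_of_cycleType_singleton hl (by omega), hcard]
  rw [← Nat.choose_mul_factorial_mul_factorial (n := Fintype.card α - S.card) (k := l) (by omega)]
  obtain ⟨m, rfl⟩ : ∃ m, l = m + 1 := ⟨l - 1, by omega⟩
  rw [Nat.factorial_succ m]
  simp only [Nat.add_sub_cancel]
  ring

/-- first moment -/
theorem first_moment {α : Type*} [Fintype α] [DecidableEq α] (l : ℕ)
    (hl : 2 ≤ l) (hS : l ≤ Fintype.card α) :
    ∑ σ : Perm α, ((σ.cycleFactorsFinset.filter (fun c => c.support.card = l)).card : ℝ) =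
      (Fintype.card α)! / l := by
  have h0 : ∀ σ : Perm α, ((σ.cycleFactorsFinset.filter (fun c => c.support.card = l)).card : ℝ) =
      ∑ c : Perm α, if (c ∈ σ.cycleFactorsFinset ∧ c.support.card = l) then (1 : ℝ) else 0 := by
    intro σ
    rw [Finset.sum_boole]
    congr 2
    ext c
    simp
  simp_rw [h0]
  rw [Finset.sum_comm]
  have h1 : ∀ c : Perm α, (∑ σ : Perm α, if (c ∈ σ.cycleFactorsFinset ∧ c.support.card = l)
      then (1 : ℝ) else 0) = if (c.cycleType = {l} ∧ _root_.Disjoint c.support ∅) then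
        ((Fintype.card α - l)! : ℝ) else 0 := by
    intro c
    rw [Finset.sum_boole]
    split_ifs with h
    · rw [cycleType_singleton_iff] at h
      norm_cast
      rw [← h.1.2, ← card_agree c.support c]
      congr 1
      ext σ
      simp only [Finset.mem_filter, Finset.mem_univ, true_and, mem_cycleFactorsFinset_iff, h.1.1,
        and_true]
      exact ⟨fun h x hx => (h x hx).symm, fun h x hx => (h x hx).symm⟩
    · norm_cast
      rw [Finset.card_eq_zero, Finset.filter_eq_empty_iff]
      rintro σ _ ⟨h2, h3⟩
      exact h ⟨(cycleType_singleton_iff _ _).2 ⟨(mem_cycleFactorsFinset_iff.1 h2).1, h3⟩, Finset.disjoint_empty_right _⟩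
  simp_rw [h1]
  rw [← Finset.sum_filter, Finset.sum_const, nsmul_eq_mul]
  have h2 := card_cycles_disjoint (∅ : Finset α) l hl (by simpa using hS)
  simp only [Finset.card_empty, Nat.sub_zero] at h2
  rw [← h2]
  have : (l : ℝ) ≠ 0 := by positivity
  push_cast
  field_simp

theorem cycles_disjoint_bound {α : Type*} [Fintype α] [DecidableEq α] (S : Finset α) (l : ℕ)
    (hl : 2 ≤ l) :
    ((Finset.univ.filter (fun c : Perm α => c.cycleType = {l} ∧
      _root_.Disjoint c.support S)).card : ℝ) * (Fintype.card α - S.card - l)! ≤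
      (Fintype.card α - S.card)! / l := by
  have hl0 : (0 : ℝ) < l := by positivity
  by_cases hS : S.card + l ≤ Fintype.card α
  · have h2 := card_cycles_disjoint S l hl hS
    rw [← h2]
    push_cast
    rw [le_div_iff₀ hl0]
    apply le_of_eq
    ring
  · have : (Finset.univ.filter (fun c : Perm α => c.cycleType = {l} ∧
      _root_.Disjoint c.support S)) = ∅ := by
      rw [Finset.filter_eq_empty_iff]
      rintro c _ ⟨h1, h2⟩
      apply hS
      rw [cycleType_singleton_iff] at h1
      rw [← h1.2, add_comm, ← Finset.card_union_of_disjoint h2]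
      exact Finset.card_le_univ _
    rw [this]
    simp
    positivity

theorem second_moment {α : Type*} [Fintype α] [DecidableEq α] (l l' : ℕ)
    (hl : 2 ≤ l) (hl' : 2 ≤ l')  :
    ∑ σ : Perm α, ((((σ.cycleFactorsFinset ×ˢ σ.cycleFactorsFinset).filter
      (fun q => q.1 ≠ q.2 ∧ q.1.support.card = l ∧ q.2.support.card = l')).card : ℕ) : ℝ) ≤
      (Fintype.card α)! / (l * l') := by
  have h0 : ∀ σ : Perm α, ((((σ.cycleFactorsFinset ×ˢ σ.cycleFactorsFinset).filter
      (fun q => q.1 ≠ q.2 ∧ q.1.support.card = l ∧ q.2.support.card = l')).card : ℕ) : ℝ) =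
      ∑ c : Perm α, ∑ d : Perm α, if (c ∈ σ.cycleFactorsFinset ∧ d ∈ σ.cycleFactorsFinset ∧
        c ≠ d ∧ c.support.card = l ∧ d.support.card = l') then (1 : ℝ) else 0 := by
    intro σ
    rw [← Finset.sum_product', Finset.sum_boole]
    congr 2
    ext c
    simp
    tauto
  simp_rw [h0]
  have hl0 : (0 : ℝ) < l := by positivity
  have hl0' : (0 : ℝ) < l' := by positivity
  rw [Finset.sum_comm]
  have h1 : ∀ c d : Perm α, (∑ σ : Perm α, if (c ∈ σ.cycleFactorsFinset ∧
      d ∈ σ.cycleFactorsFinset ∧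
        c ≠ d ∧ c.support.card = l ∧ d.support.card = l') then (1 : ℝ) else 0) ≤
        if c.cycleType = {l} then (if (d.cycleType = {l'} ∧ _root_.Disjoint d.support c.support)
          then ((Fintype.card α - l - l')! : ℝ) else 0) else 0 := by
    intro c d
    rw [Finset.sum_boole, ← ite_and]
    split_ifs with h
    · obtain ⟨h1, h2, h3⟩ := h
      rw [cycleType_singleton_iff] at h1 h2
      norm_cast
      have hd : Disjoint c d := by
        rw [disjoint_iff_disjoint_support]
        exact h3.symm
      have hcard : (c.support ∪ d.support).card = l + l' := by
        rw [Finset.card_union_of_disjoint h3.symm, h1.2, h2.2]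
      rw [Nat.sub_sub, ← hcard, ← card_agree (c.support ∪ d.support) (c * d)]
      apply Finset.card_le_card
      intro σ hσ
      simp only [Finset.mem_filter, Finset.mem_univ, true_and, mem_cycleFactorsFinset_iff] at hσ ⊢
      intro x hx
      rcases Finset.mem_union.1 hx with hx | hx
      · rw [← hσ.1.2 x hx, Perm.mul_apply]
        have : d x = x := by
          rw [← notMem_support]
          exact Finset.disjoint_right.1 h3 hx
        rw [this]
      · rw [← hσ.2.1.2 x hx, hd.commute.eq, Perm.mul_apply]
        have : c x = x := by
          rw [← notMem_support]
          exact Finset.disjoint_left.1 h3 hx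
        rw [this]
    · norm_cast
      rw [Nat.le_zero, Finset.card_eq_zero, Finset.filter_eq_empty_iff]
      rintro σ _ ⟨h2, h3, h4, h5, h6⟩
      apply h
      refine ⟨(cycleType_singleton_iff _ _).2 ⟨(mem_cycleFactorsFinset_iff.1 h2).1, h5⟩,
        (cycleType_singleton_iff _ _).2 ⟨(mem_cycleFactorsFinset_iff.1 h3).1, h6⟩, ?_⟩
      have := cycleFactorsFinset_pairwise_disjoint σ h2 h3 h4
      rw [disjoint_iff_disjoint_support] at this
      exact this.symm
  have h2 : ∀ c : Perm α, (∑ σ : Perm α, ∑ d : Perm α, if (c ∈ σ.cycleFactorsFinset ∧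
      d ∈ σ.cycleFactorsFinset ∧
        c ≠ d ∧ c.support.card = l ∧ d.support.card = l') then (1 : ℝ) else 0) ≤
        if (c.cycleType = {l} ∧ _root_.Disjoint c.support ∅) then
          ((Fintype.card α - l)! : ℝ) / l' else 0 := by
    intro c
    rw [Finset.sum_comm]
    refine (Finset.sum_le_sum (fun d _ => h1 c d)).trans ?_
    by_cases h : c.cycleType = {l}
    · simp only [h, if_true, Finset.disjoint_empty_right, and_self]
      rw [← Finset.sum_filter, Finset.sum_const, nsmul_eq_mul]
      have := cycles_disjoint_bound c.support l' hl'
      rw [cycleType_singleton_iff] at h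
      rwa [h.2] at this
    · simp [h]
  refine (Finset.sum_le_sum (fun c _ => h2 c)).trans ?_
  rw [← Finset.sum_filter, Finset.sum_const, nsmul_eq_mul]
  have := cycles_disjoint_bound (∅ : Finset α) l hl
  simp only [Finset.card_empty, Nat.sub_zero] at this
  rw [← div_div, mul_div_assoc']
  gcongr

theorem one_le_sum_aux {ι : Type*} (s : Finset ι) (f : ι → ℕ) (i : ι) (hi : i ∈ s)
    (h : 0 < f i) : (1 : ℝ) ≤ ∑ j ∈ s, (f j : ℝ) := by
  have h1 : (1 : ℝ) ≤ f i := Nat.one_le_cast.2 h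
  exact h1.trans (Finset.single_le_sum (f := fun j => (f j : ℝ)) (fun _ _ => Nat.cast_nonneg _) hi)

/-- number of cycles with length in P -/
noncomputable def cycX {α : Type*} [Fintype α] [DecidableEq α] (P : Finset ℕ) (σ : Perm α) : ℝ :=
  ∑ l ∈ P, ((σ.cycleFactorsFinset.filter (fun c => c.support.card = l)).card : ℝ)

theorem cycX_eq {α : Type*} [Fintype α] [DecidableEq α] (P : Finset ℕ) (σ : Perm α) :
    cycX P σ = ((σ.cycleFactorsFinset.filter (fun c => c.support.card ∈ P)).card : ℝ) := by
  rw [cycX]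
  norm_cast
  rw [Finset.card_eq_sum_card_fiberwise (f := fun c => c.support.card) (t := P)]
  · apply Finset.sum_congr rfl
    intro l hl
    congr 1
    ext c
    simp only [Finset.mem_filter]
    constructor
    · rintro ⟨h1, rfl⟩
      exact ⟨⟨h1, hl⟩, rfl⟩
    · rintro ⟨⟨h1, _⟩, h2⟩
      exact ⟨h1, h2⟩
  · intro c hc
    simp only [Finset.coe_filter, Set.mem_ofPred_eq] at hc
    exact hc.2

theorem cycX_sq {α : Type*} [Fintype α] [DecidableEq α] (P : Finset ℕ) (σ : Perm α) :
    cycX P σ ^ 2 = cycX P σ + ∑ l ∈ P, ∑ l' ∈ P,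
      ((((σ.cycleFactorsFinset ×ˢ σ.cycleFactorsFinset).filter
      (fun q => q.1 ≠ q.2 ∧ q.1.support.card = l ∧ q.2.support.card = l')).card : ℕ) : ℝ) := by
  have h1 : ∑ l ∈ P, ∑ l' ∈ P,
      ((((σ.cycleFactorsFinset ×ˢ σ.cycleFactorsFinset).filter
      (fun q => q.1 ≠ q.2 ∧ q.1.support.card = l ∧ q.2.support.card = l')).card : ℕ) : ℝ) =
      (((σ.cycleFactorsFinset.filter (fun c => c.support.card ∈ P)).offDiag.card : ℕ) : ℝ) := by
    rw [← Finset.sum_product']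
    norm_cast
    rw [Finset.card_eq_sum_card_fiberwise
      (f := fun q : Perm α × Perm α => (q.1.support.card, q.2.support.card)) (t := P ×ˢ P)]
    · apply Finset.sum_congr rfl
      rintro ⟨l, l'⟩ hl
      rw [Finset.mem_product] at hl
      congr 1
      ext ⟨c, d⟩
      simp only [Finset.mem_filter, Finset.mem_offDiag, Finset.mem_product, Prod.mk.injEq]
      constructor
      · rintro ⟨⟨h1, h2⟩, h3, rfl, rfl⟩
        exact ⟨⟨⟨h1, hl.1⟩, ⟨h2, hl.2⟩, h3⟩, rfl, rfl⟩
      · rintro ⟨⟨⟨h1, _⟩, ⟨h2, _⟩, h3⟩, h4, h5⟩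
        exact ⟨⟨h1, h2⟩, h3, h4, h5⟩
    · rintro ⟨c, d⟩ hc
      simp only [Finset.mem_coe, Finset.mem_filter, Finset.mem_offDiag, Finset.mem_product] at hc ⊢
      exact ⟨hc.1.2, hc.2.1.2⟩
  rw [h1, cycX_eq, Finset.offDiag_card, Nat.cast_sub (Nat.le_mul_self _)]
  push_cast
  ring

theorem no_cycle_bound {α : Type*} [Fintype α] [DecidableEq α] (P : Finset ℕ)
    (hP : ∀ l ∈ P, 2 ≤ l ∧ l ≤ Fintype.card α) :
    ((Finset.univ.filter (fun σ : Perm α => ∀ c ∈ σ.cycleFactorsFinset,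
      c.support.card ∉ P)).card : ℝ) * (∑ l ∈ P, (1 : ℝ) / l) ≤ (Fintype.card α)! := by
  set μ : ℝ := ∑ l ∈ P, (1 : ℝ) / l with hμ
  set N : ℝ := ((Fintype.card α)! : ℝ) with hN
  have hμ0 : 0 ≤ μ := Finset.sum_nonneg (fun _ _ => by positivity)
  have hN0 : 0 < N := by positivity
  rcases hμ0.eq_or_lt with h0 | hpos
  · rw [← h0, mul_zero]; exact hN0.le
  have hX : ∑ σ : Perm α, cycX P σ = N * μ := by
    simp only [cycX]
    rw [Finset.sum_comm, hμ, Finset.mul_sum]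
    apply Finset.sum_congr rfl
    intro l hl
    rw [first_moment l (hP l hl).1 (hP l hl).2]
    ring
  have hX2 : ∑ σ : Perm α, cycX P σ ^ 2 ≤ N * μ + N * μ ^ 2 := by
    simp_rw [cycX_sq]
    rw [Finset.sum_add_distrib, hX]
    gcongr
    rw [Finset.sum_comm]
    have : N * μ ^ 2 = ∑ l ∈ P, ∑ l' ∈ P, N / (l * l') := by
      rw [sq, hμ, Finset.sum_mul_sum, Finset.mul_sum]
      apply Finset.sum_congr rfl
      intro l hl
      rw [Finset.mul_sum]
      apply Finset.sum_congr rfl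
      intro l' hl'
      rw [one_div_mul_one_div, mul_one_div]
    rw [this]
    apply Finset.sum_le_sum
    intro l hl
    rw [Finset.sum_comm]
    apply Finset.sum_le_sum
    intro l' hl'
    exact second_moment l l' (hP l hl).1 (hP l' hl').1
  have hvar : ∑ σ : Perm α, (cycX P σ - μ) ^ 2 ≤ N * μ := by
    have : ∑ σ : Perm α, (cycX P σ - μ) ^ 2 =
        ∑ σ : Perm α, cycX P σ ^ 2 - 2 * μ * ∑ σ : Perm α, cycX P σ + N * μ ^ 2 := by
      simp_rw [sub_sq]
      rw [Finset.sum_add_distrib, Finset.sum_sub_distrib, Finset.sum_const, Finset.card_univ,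
        Fintype.card_perm, nsmul_eq_mul, Finset.mul_sum]
      congr 2
      apply Finset.sum_congr rfl
      intro σ _
      ring
    rw [this, hX]
    nlinarith
  have hlow : ((Finset.univ.filter (fun σ : Perm α => ∀ c ∈ σ.cycleFactorsFinset,
      c.support.card ∉ P)).card : ℝ) * μ ^ 2 ≤ ∑ σ : Perm α, (cycX P σ - μ) ^ 2 := by
    rw [← nsmul_eq_mul, ← Finset.sum_const]
    refine le_trans (Finset.sum_le_sum (fun σ hσ => ?_))
      (Finset.sum_le_sum_of_subset_of_nonneg (Finset.filter_subset _ _)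
        (fun _ _ _ => sq_nonneg _))
    have : cycX P σ = 0 := by
      rw [cycX_eq]
      norm_cast
      rw [Finset.card_eq_zero, Finset.filter_eq_empty_iff]
      intro c hc
      exact (Finset.mem_filter.1 hσ).2 c hc
    rw [this]
    simp
  have := hlow.trans hvar
  rw [sq, ← mul_assoc] at this
  exact le_of_mul_le_mul_right this hpos

theorem div_bound {α : Type*} [Fintype α] [DecidableEq α] (p : ℕ) (hp : 2 ≤ p) :
    ((Finset.univ.filter (fun σ : Perm α => ∃ c ∈ σ.cycleFactorsFinset,
      p ∣ c.support.card)).card : ℝ) ≤ (Fintype.card α)! *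
        (∑ j ∈ Finset.Icc 1 (Fintype.card α), (1 : ℝ) / j) / p := by
  set n := Fintype.card α with hn
  have h1 : ((Finset.univ.filter (fun σ : Perm α => ∃ c ∈ σ.cycleFactorsFinset,
      p ∣ c.support.card)).card : ℝ) ≤ ∑ σ : Perm α, ∑ j ∈ (Finset.Icc 1 n).filter (fun j => j * p ≤ n),
        ((σ.cycleFactorsFinset.filter (fun c => c.support.card = j * p)).card : ℝ) := by
    rw [← Finset.sum_boole]
    apply Finset.sum_le_sum
    intro σ _
    split_ifs with h
    · obtain ⟨c, hc, j, hj⟩ := h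
      have hle : c.support.card ≤ n := Finset.card_le_univ _
      have hpos : 0 < c.support.card := by
        have := (mem_cycleFactorsFinset_iff.1 hc).1.two_le_card_support
        omega
      have hj0 : 0 < j := by
        rcases Nat.eq_zero_or_pos j with h | h
        · rw [h, mul_zero] at hj; omega
        · exact h
      have hjn : j * p ≤ n := by rw [mul_comm, ← hj]; exact hle
      have hjn' : j ≤ n := le_trans (Nat.le_mul_of_pos_right _ (by omega)) hjn
      refine one_le_sum_aux _ _ j ?_ ?_
      · exact Finset.mem_filter.2 ⟨Finset.mem_Icc.2 ⟨hj0, hjn'⟩, hjn⟩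
      · rw [Finset.card_pos]
        exact ⟨c, Finset.mem_filter.2 ⟨hc, by rw [hj, mul_comm]⟩⟩
    · exact Finset.sum_nonneg (fun _ _ => by positivity)
  refine h1.trans ?_
  rw [Finset.sum_comm]
  have h2 : ∀ j ∈ (Finset.Icc 1 n).filter (fun j => j * p ≤ n), ∑ σ : Perm α,
      ((σ.cycleFactorsFinset.filter (fun c => c.support.card = j * p)).card : ℝ) =
      (n ! : ℝ) / p * (1 / j) := by
    intro j hj
    rw [Finset.mem_filter, Finset.mem_Icc] at hj
    rw [first_moment (j * p) (by nlinarith) hj.2]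
    push_cast
    rw [← hn, mul_comm (j : ℝ), ← div_div, mul_one_div]
  rw [Finset.sum_congr rfl h2, ← Finset.mul_sum, mul_div_right_comm]
  gcongr
  exact Finset.filter_subset _ _

theorem dup_bound {α : Type*} [Fintype α] [DecidableEq α] (P : Finset ℕ)
    (hP : ∀ l ∈ P, 2 ≤ l) :
    ((Finset.univ.filter (fun σ : Perm α => ∃ p ∈ P, ∃ c ∈ σ.cycleFactorsFinset,
      ∃ d ∈ σ.cycleFactorsFinset, c ≠ d ∧ c.support.card = p ∧ p ∣ d.support.card)).card : ℝ) ≤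
        (Fintype.card α)! *
        (∑ j ∈ Finset.Icc 1 (Fintype.card α), (1 : ℝ) / j) * ∑ p ∈ P, (1 : ℝ) / p ^ 2 := by
  set n := Fintype.card α with hn
  have h1 : ((Finset.univ.filter (fun σ : Perm α => ∃ p ∈ P, ∃ c ∈ σ.cycleFactorsFinset,
      ∃ d ∈ σ.cycleFactorsFinset, c ≠ d ∧ c.support.card = p ∧ p ∣ d.support.card)).card : ℝ) ≤
      ∑ σ : Perm α, ∑ q ∈ P ×ˢ (Finset.Icc 1 n),
      ((((σ.cycleFactorsFinset ×ˢ σ.cycleFactorsFinset).filter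
      (fun r => r.1 ≠ r.2 ∧ r.1.support.card = q.1 ∧ r.2.support.card = q.2 * q.1)).card : ℕ) : ℝ) := by
    rw [← Finset.sum_boole]
    apply Finset.sum_le_sum
    intro σ _
    split_ifs with h
    · obtain ⟨p, hp, c, hc, d, hd, hcd, hcp, j, hj⟩ := h
      have hle : d.support.card ≤ n := Finset.card_le_univ _
      have hpos : 0 < d.support.card := by
        have := (mem_cycleFactorsFinset_iff.1 hd).1.two_le_card_support
        omega
      have hj0 : 0 < j := by
        rcases Nat.eq_zero_or_pos j with h | h
        · rw [h, mul_zero] at hj; omega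
        · exact h
      have hjn : j * p ≤ n := by rw [mul_comm, ← hj]; exact hle
      have hp2 := hP p hp
      have hjn' : j ≤ n := le_trans (Nat.le_mul_of_pos_right _ (by omega)) hjn
      refine one_le_sum_aux _ _ (p, j) ?_ ?_
      · exact Finset.mem_product.2 ⟨hp, Finset.mem_Icc.2 ⟨hj0, hjn'⟩⟩
      · rw [Finset.card_pos]
        exact ⟨(c, d), Finset.mem_filter.2 ⟨Finset.mem_product.2 ⟨hc, hd⟩, hcd, hcp,
          by simp only [hj]; rw [mul_comm]⟩⟩
    · exact Finset.sum_nonneg (fun _ _ => by positivity)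
  refine h1.trans ?_
  have h3 : (n ! : ℝ) * (∑ j ∈ Finset.Icc 1 n, (1 : ℝ) / j) * ∑ p ∈ P, (1 : ℝ) / p ^ 2 =
      ∑ q ∈ P ×ˢ (Finset.Icc 1 n), (n ! : ℝ) * ((1 : ℝ) / q.1 ^ 2 * (1 / q.2)) := by
    rw [mul_assoc, mul_comm (∑ j ∈ Finset.Icc 1 n, (1 : ℝ) / j),
      Finset.sum_mul_sum, ← Finset.sum_product', Finset.mul_sum]
  rw [h3, Finset.sum_comm]
  apply Finset.sum_le_sum
  rintro ⟨p, j⟩ hpj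
  rw [Finset.mem_product, Finset.mem_Icc] at hpj
  have hp2 := hP p hpj.1
  refine (second_moment p (j * p) hp2 (by nlinarith [hpj.2.1])).trans (le_of_eq ?_)
  push_cast
  rw [← hn, one_div_mul_one_div, mul_one_div]
  congr 1
  ring

end PartB

section PartD
open scoped Nat

theorem euler_lower (N : ℕ) (hN : 1 ≤ N) :
    Real.log N ≤ ∏ p ∈ N.primesBelow, (1 - (1 : ℝ) / p)⁻¹ := by
  let f : ℕ →* ℝ := { toFun := fun n => (1 : ℝ) / n, map_one' := by simp,
                      map_mul' := by intro a b; push_cast; rw [one_div_mul_one_div] }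
  have hf : ∀ n, f n = 1 / (n : ℝ) := fun n => rfl
  have hlt : ∀ {p : ℕ}, p.Prime → ‖f p‖ < 1 := by
    intro p hp
    rw [hf, norm_div, norm_one, Real.norm_natCast, div_lt_one (by exact_mod_cast hp.pos)]
    exact_mod_cast hp.one_lt
  obtain ⟨h1, h2⟩ := EulerProduct.summable_and_hasSum_smoothNumbers_prod_primesBelow_geometric
    hlt N
  simp only [hf] at h2
  have h3 := log_add_one_le_harmonic (N - 1)
  rw [show N - 1 + 1 = N by omega] at h3
  refine h3.trans ?_
  rw [harmonic_eq_sum_Icc]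
  push_cast
  let e : ↥(Finset.Icc 1 (N - 1)) ↪ N.smoothNumbers :=
    ⟨fun i => ⟨i.1, Nat.mem_smoothNumbers_of_lt (by have := Finset.mem_Icc.1 i.2; omega)
      (by have := Finset.mem_Icc.1 i.2; omega)⟩, fun a b h => by
        apply Subtype.ext
        simpa using h⟩
  have h4 := sum_le_hasSum ((Finset.univ : Finset ↥(Finset.Icc 1 (N - 1))).map e)
    (fun i _ => by positivity) h2
  rw [Finset.sum_map] at h4
  refine le_trans (le_of_eq ?_) h4
  rw [← Finset.sum_coe_sort]
  exact Finset.sum_congr rfl (fun i _ => (one_div _).symm)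

theorem euler_upper (a : ℕ) (ha : 1 ≤ a) :
    ∏ p ∈ (a + 1).primesBelow, (1 - (1 : ℝ) / p)⁻¹ ≤ 2 * √a := by
  induction a using Nat.strong_induction_on with
  | _ a ih =>
  by_cases hp : a.Prime
  · have hmem : a ∉ a.primesBelow := by simp [Nat.mem_primesBelow]
    rw [Nat.primesBelow_succ, if_pos hp, Finset.prod_insert hmem]
    rcases Nat.lt_or_ge a 4 with h4 | h4
    · have : a = 2 ∨ a = 3 := by
        have := hp.two_le; omega
      rcases this with rfl | rfl
      · have : (Nat.primesBelow 2) = ∅ := by decide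
        rw [this]
        have : (1 : ℝ) ≤ √(2 : ℕ) := by
          rw [Real.one_le_sqrt]; norm_num
        norm_num at this ⊢
      · have : (Nat.primesBelow 3) = {2} := by decide
        rw [this]
        have : (3 / 2 : ℝ) ≤ √(3 : ℕ) := by
          apply Real.le_sqrt_of_sq_le; norm_num
        norm_num at this ⊢
        linarith
    · obtain ⟨b, rfl⟩ : ∃ b, a = b + 2 := ⟨a - 2, by omega⟩
      have hnp : ¬ (b + 1).Prime := by
        intro h
        have h1 := hp.eq_two_or_odd
        have h2 := h.eq_two_or_odd
        omega
      have ihb := ih b (by omega) (by omega)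
      rw [Nat.primesBelow_succ (b + 1), if_neg hnp]
      have hb : (2 : ℝ) ≤ b := by exact_mod_cast (by omega : 2 ≤ b)
      have e1 : (1 - (1 : ℝ) / ((b + 2 : ℕ) : ℝ))⁻¹ = (b + 2) / (b + 1) := by
        push_cast
        rw [one_sub_div (by positivity), inv_div]
        congr 1
        ring
      rw [e1]
      have e2 : (b + 2) / (b + 1) * √(b : ℝ) ≤ √((b + 2 : ℕ) : ℝ) := by
        apply Real.le_sqrt_of_sq_le
        rw [mul_pow, Real.sq_sqrt (by positivity), div_pow, div_mul_eq_mul_div,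
          div_le_iff₀ (by positivity)]
        push_cast
        nlinarith
      calc _ ≤ ((b : ℝ) + 2) / (b + 1) * (2 * √b) := by gcongr
        _ = 2 * (((b : ℝ) + 2) / (b + 1) * √b) := by ring
        _ ≤ _ := by gcongr
  · rw [Nat.primesBelow_succ, if_neg hp]
    rcases Nat.lt_or_ge a 2 with h2 | h2
    · have : a = 1 := by omega
      subst this
      have : (Nat.primesBelow 1) = ∅ := by decide
      rw [this]
      norm_num
    · obtain ⟨b, rfl⟩ : ∃ b, a = b + 1 := ⟨a - 1, by omega⟩
      refine (ih b (by omega) (by omega)).trans ?_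
      gcongr
      omega

theorem prime_sum_lower (a N : ℕ) (ha : 1 ≤ a) (haN : a + 1 ≤ N) :
    Real.log (Real.log N / (2 * √a)) ≤
      2 * ∑ p ∈ (Finset.Ioo a N).filter Nat.Prime, (1 : ℝ) / p := by
  have h1 := euler_lower N (by omega)
  have h2 := euler_upper a ha
  have hd : Disjoint (a + 1).primesBelow ((Finset.Ioo a N).filter Nat.Prime) := by
    rw [Finset.disjoint_left]
    intro p hp hp'
    rw [Nat.mem_primesBelow] at hp
    rw [Finset.mem_filter, Finset.mem_Ioo] at hp'
    omega
  have hu : N.primesBelow = (a + 1).primesBelow ∪ ((Finset.Ioo a N).filter Nat.Prime) := by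
    ext p
    simp only [Nat.mem_primesBelow, Finset.mem_union, Finset.mem_filter, Finset.mem_Ioo]
    constructor
    · rintro ⟨h, h'⟩
      by_cases hpa : p < a + 1
      · exact Or.inl ⟨hpa, h'⟩
      · exact Or.inr ⟨⟨by omega, h⟩, h'⟩
    · rintro (⟨h, h'⟩ | ⟨⟨h, h''⟩, h'⟩)
      · exact ⟨by omega, h'⟩
      · exact ⟨h'', h'⟩
  rw [hu, Finset.prod_union hd] at h1
  have h3 : ∏ p ∈ (Finset.Ioo a N).filter Nat.Prime, (1 - (1 : ℝ) / p)⁻¹ ≤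
      Real.exp (2 * ∑ p ∈ (Finset.Ioo a N).filter Nat.Prime, (1 : ℝ) / p) := by
    rw [Finset.mul_sum, Real.exp_sum]
    apply Finset.prod_le_prod
    · intro p hp
      have hp' := (Finset.mem_filter.1 hp).2.two_le
      have : (2 : ℝ) ≤ p := by exact_mod_cast hp'
      rw [inv_nonneg, sub_nonneg, div_le_one (by positivity)]
      linarith
    · intro p hp
      have hp' := (Finset.mem_filter.1 hp).2.two_le
      have h2p : (2 : ℝ) ≤ p := by exact_mod_cast hp'
      refine le_trans ?_ (Real.add_one_le_exp _)
      rw [one_sub_div (by positivity), inv_div, div_le_iff₀ (by linarith)]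
      have : (2 * (1 / (p : ℝ)) + 1) * (p - 1) = 2 + p - 1 - 2 / p := by
        field_simp
        ring
      rw [this]
      have : 2 / (p : ℝ) ≤ 1 := by rw [div_le_one (by positivity)]; exact h2p
      linarith
  have ha0 : (0 : ℝ) < 2 * √a := by
    have : (0 : ℝ) < a := by exact_mod_cast ha
    positivity
  have hlog : 0 < Real.log N := Real.log_pos (by exact_mod_cast (by omega : 1 < N))
  rw [Real.log_le_iff_le_exp (by positivity), div_le_iff₀ ha0]
  calc Real.log N ≤ _ := h1
    _ ≤ (2 * √a) * _ := by
        refine mul_le_mul_of_nonneg_right h2 (Finset.prod_nonneg fun p hp => ?_)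
        have hp' := (Finset.mem_filter.1 hp).2.two_le
        have : (2 : ℝ) ≤ p := by exact_mod_cast hp'
        rw [inv_nonneg, sub_nonneg, div_le_one (by positivity)]
        linarith
    _ ≤ _ := by
        rw [mul_comm]
        exact mul_le_mul_of_nonneg_right h3 ha0.le

end PartD
section PartC
open MulAction
open scoped Pointwise

theorem fixed_pair_bound {G X : Type*} [Group G] [Finite G] [MulAction G X] (x0 : X) :
    ({p : G × G | ∃ x ∈ orbit G x0, p.1 • x = x ∧ p.2 • x = x}.ncard : ℝ) ≤
      (Nat.card G : ℝ) ^ 2 / (Nat.card (orbit G x0) : ℝ) := by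
  classical
  have := Fintype.ofFinite G
  have hfin : (orbit G x0).Finite := Set.finite_range _
  have hst : ∀ x ∈ orbit G x0, Nat.card (orbit G x0) * Nat.card (stabilizer G x) = Nat.card G := by
    intro x hx
    rw [← orbit_eq_iff.2 hx, ← Nat.card_prod]
    exact Nat.card_congr (orbitProdStabilizerEquivGroup G x)
  have hpos : 0 < Nat.card (orbit G x0) := by
    have : Finite (orbit G x0) := hfin
    have : Nonempty (orbit G x0) := ⟨⟨x0, mem_orbit_self x0⟩⟩
    exact Nat.card_pos
  have hsub : {p : G × G | ∃ x ∈ orbit G x0, p.1 • x = x ∧ p.2 • x = x} ⊆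
      ⋃ x ∈ hfin.toFinset, ((stabilizer G x : Set G) ×ˢ (stabilizer G x : Set G)) := by
    rintro p ⟨x, hx, h1, h2⟩
    simp only [Set.mem_iUnion]
    exact ⟨x, hfin.mem_toFinset.2 hx, h1, h2⟩
  have h1 : {p : G × G | ∃ x ∈ orbit G x0, p.1 • x = x ∧ p.2 • x = x}.ncard ≤
      ∑ x ∈ hfin.toFinset, Nat.card (stabilizer G x) ^ 2 := by
    refine (Set.ncard_le_ncard hsub (Set.toFinite _)).trans ?_
    refine (Finset.set_ncard_biUnion_le _ _).trans (Finset.sum_le_sum fun x _ => ?_)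
    rw [Set.ncard_prod, sq]
    rfl
  have h2 : ((∑ x ∈ hfin.toFinset, Nat.card (stabilizer G x) ^ 2 : ℕ) : ℝ) =
      (Nat.card G : ℝ) ^ 2 / (Nat.card (orbit G x0) : ℝ) := by
    have hp : (0 : ℝ) < Nat.card (orbit G x0) := by exact_mod_cast hpos
    have : ∀ x ∈ hfin.toFinset, ((Nat.card (stabilizer G x) : ℝ)) ^ 2 =
        ((Nat.card G : ℝ) / Nat.card (orbit G x0)) ^ 2 := by
      intro x hx
      rw [← hst x (hfin.mem_toFinset.1 hx)]
      push_cast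
      rw [mul_div_cancel_left₀ _ hp.ne']
    push_cast
    rw [Finset.sum_congr rfl this, Finset.sum_const, nsmul_eq_mul,
      ← Set.ncard_eq_toFinset_card _ hfin]
    change (Nat.card (orbit G x0) : ℝ) * _ = _
    field_simp
  rw [← h2]
  exact_mod_cast h1

variable {α : Type*} [Fintype α]

theorem exists_perm_image (B C : Set α) (h : B.ncard = C.ncard) :
    ∃ π : Equiv.Perm α, π • B = C := by
  classical
  have hc : Nat.card B = Nat.card C := h
  obtain ⟨e⟩ : Nonempty (B ≃ C) := Finite.card_eq.1 hc
  refine ⟨e.extendSubtype, ?_⟩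
  apply Set.eq_of_subset_of_ncard_le
  · rintro _ ⟨x, hx, rfl⟩
    exact e.extendSubtype_mem x hx
  · rw [← h]
    rw [Set.ncard_smul_set]
  · exact Set.toFinite _

theorem subset_pairs_bound (i : ℕ) (hi : i ≤ Fintype.card α) :
    ({p : Equiv.Perm α × Equiv.Perm α | ∃ B : Set α, B.ncard = i ∧ p.1 • B = B ∧ p.2 • B = B}.ncard : ℝ)
      ≤ ((Fintype.card α).factorial : ℝ) ^ 2 / ((Fintype.card α).choose i : ℝ) := by
  classical
  obtain ⟨B0, -, hB0⟩ := Finset.exists_subset_card_eq (s := (Finset.univ : Finset α)) (n := i) hi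
  have h := fixed_pair_bound (G := Equiv.Perm α) (X := Set α) (B0 : Set α)
  have ho : orbit (Equiv.Perm α) (B0 : Set α) = {B : Set α | B.ncard = i} := by
    ext B
    constructor
    · rintro ⟨π, rfl⟩
      change (π • (B0 : Set α)).ncard = i
      rw [Set.ncard_smul_set, Set.ncard_coe_finset, hB0]
    · intro hB
      obtain ⟨π, hπ⟩ := exists_perm_image (B0 : Set α) B (by
        rw [Set.ncard_coe_finset, hB0]; exact hB.symm)
      exact ⟨π, hπ⟩
  rw [ho] at h
  have hc : Nat.card {B : Set α | B.ncard = i} = (Fintype.card α).choose i := by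
    rw [← Finset.card_univ, ← Finset.card_powersetCard, ← Set.ncard_coe_finset]
    symm
    apply Set.ncard_congr (fun (B : Finset α) _ => (B : Set α))
    · intro B hB
      change (B : Set α).ncard = i
      rw [Set.ncard_coe_finset]
      exact (Finset.mem_powersetCard.1 hB).2
    · intro B C _ _ h
      exact_mod_cast h
    · intro B hB
      refine ⟨B.toFinset, ?_, by simp⟩
      rw [Finset.mem_coe, Finset.mem_powersetCard]
      refine ⟨Finset.subset_univ _, ?_⟩
      rw [← Set.ncard_eq_toFinset_card']
      exact hB
  rw [hc, Nat.card_perm, Nat.card_eq_fintype_card] at h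
  exact h

/-- the relation, viewed as a set of pairs, is an equivalence with all classes of size `d` -/
def IsUnif (d : ℕ) (R : Set (α × α)) : Prop :=
  Equivalence (fun x y => (x, y) ∈ R) ∧ ∀ x, {y | (x, y) ∈ R}.ncard = d

theorem IsUnif.exists_equiv {d : ℕ} {R : Set (α × α)} (h : IsUnif d R) :
    ∃ e : α ≃ Quotient (⟨_, h.1⟩ : Setoid α) × Fin d, ∀ x, (e x).1 = Quotient.mk _ x := by
  classical
  have hq : ∀ q : Quotient (⟨_, h.1⟩ : Setoid α),
      Nonempty ({x : α // Quotient.mk (⟨_, h.1⟩ : Setoid α) x = q} ≃ Fin d) := by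
    intro q
    induction q using Quotient.inductionOn with
    | h a =>
      refine ⟨Finite.equivFinOfCardEq ?_⟩
      refine Eq.trans ?_ (h.2 a)
      change _ = Nat.card {y // (a, y) ∈ R}
      apply Nat.card_congr
      apply Equiv.subtypeEquivRight
      intro x
      rw [Quotient.eq]
      exact ⟨fun hx => h.1.symm hx, fun hx => h.1.symm hx⟩
  let E := fun q => (hq q).some
  refine ⟨(Equiv.sigmaFiberEquiv (Quotient.mk (⟨_, h.1⟩ : Setoid α))).symm.trans
    ((Equiv.sigmaCongrRight E).trans (Equiv.sigmaEquivProd _ _)), fun x => rfl⟩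

theorem IsUnif.conj {d : ℕ} (hd : 0 < d) {R S : Set (α × α)} (hR : IsUnif d R) (hS : IsUnif d S) :
    ∃ π : Equiv.Perm α, π • R = S := by
  classical
  obtain ⟨e, he⟩ := hR.exists_equiv
  obtain ⟨f, hf⟩ := hS.exists_equiv
  have hc : Nat.card (Quotient (⟨_, hR.1⟩ : Setoid α)) = Nat.card (Quotient (⟨_, hS.1⟩ : Setoid α)) := by
    have h1 := Nat.card_congr e
    have h2 := Nat.card_congr f
    rw [h1, Nat.card_prod, Nat.card_prod, Nat.card_fin] at h2
    exact Nat.eq_of_mul_eq_mul_right hd h2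
  obtain ⟨g⟩ := Finite.card_eq.1 hc
  let π : Equiv.Perm α := e.trans ((Equiv.prodCongr g (Equiv.refl _)).trans f.symm)
  have hπ : ∀ x y, (x, y) ∈ R ↔ (π x, π y) ∈ S := by
    intro x y
    have h1 : (x, y) ∈ R ↔ (e x).1 = (e y).1 := by
      rw [he, he, Quotient.eq]; rfl
    have h2 : (π x, π y) ∈ S ↔ (f (π x)).1 = (f (π y)).1 := by
      rw [hf, hf, Quotient.eq]; rfl
    rw [h1, h2]
    simp [π]
  refine ⟨π, ?_⟩
  ext ⟨x, y⟩
  rw [Set.mem_smul_set_iff_inv_smul_mem]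
  change (π⁻¹ x, π⁻¹ y) ∈ R ↔ _
  rw [hπ]
  simp

theorem IsUnif.smul {d : ℕ} {R : Set (α × α)} (hR : IsUnif d R) (π : Equiv.Perm α) :
    IsUnif d (π • R) := by
  have key : ∀ x y, (x, y) ∈ π • R ↔ (π⁻¹ x, π⁻¹ y) ∈ R := fun x y => by
    rw [Set.mem_smul_set_iff_inv_smul_mem]; rfl
  refine ⟨⟨fun x => ?_, fun {x y} h => ?_, fun {x y z} h h' => ?_⟩, fun x => ?_⟩
  · rw [key]; exact hR.1.refl _
  · rw [key] at *; exact hR.1.symm h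
  · rw [key] at *; exact hR.1.trans h h'
  · have : {y | (x, y) ∈ π • R} = π • {y | (π⁻¹ x, y) ∈ R} := by
      ext y
      rw [Set.mem_smul_set_iff_inv_smul_mem]
      exact key x y
    rw [this, Set.ncard_smul_set, hR.2]

theorem block_pairs_bound [Nonempty α] (i : ℕ) (hi : i + 1 ≤ Fintype.card α) :
    ({p : Equiv.Perm α × Equiv.Perm α | ∃ R : Set (α × α), IsUnif (i + 1) R ∧ p.1 • R = R ∧ p.2 • R = R}.ncard : ℝ)
      ≤ ((Fintype.card α).factorial : ℝ) ^ 2 / ((Fintype.card α - 1).choose i : ℝ) := by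
  classical
  by_cases hex : ∃ R : Set (α × α), IsUnif (i + 1) R
  swap
  · have : {p : Equiv.Perm α × Equiv.Perm α | ∃ R : Set (α × α), IsUnif (i + 1) R ∧ p.1 • R = R ∧ p.2 • R = R} = ∅ := by
      ext p
      simp only [Set.mem_empty_iff_false, iff_false]
      rintro ⟨R, hR, -⟩
      exact hex ⟨R, hR⟩
    rw [this]
    simp only [Set.ncard_empty, Nat.cast_zero]
    positivity
  obtain ⟨R0, hR0⟩ := hex
  have h := fixed_pair_bound (G := Equiv.Perm α) (X := Set (α × α)) R0
  have ho : orbit (Equiv.Perm α) R0 = {R | IsUnif (i + 1) R} := by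
    ext R
    constructor
    · rintro ⟨π, rfl⟩
      exact hR0.smul π
    · intro hR
      obtain ⟨π, hπ⟩ := hR0.conj (by omega) hR
      exact ⟨π, hπ⟩
  rw [ho] at h
  refine h.trans ?_
  rw [Nat.card_perm, Nat.card_eq_fintype_card]
  have hpos : 0 < (Fintype.card α - 1).choose i := Nat.choose_pos (by omega)
  have hle : (Fintype.card α - 1).choose i ≤ Nat.card {R : Set (α × α) | IsUnif (i + 1) R} := by
    let a : α := Classical.arbitrary α
    have e1 : (Fintype.card α - 1).choose i = ((Finset.univ.erase a).powersetCard i).card := by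
      rw [Finset.card_powersetCard, Finset.card_erase_of_mem (Finset.mem_univ _), Finset.card_univ]
    have hch : ∀ B ∈ (Finset.univ.erase a).powersetCard i, ∃ R : Set (α × α), IsUnif (i + 1) R ∧
        {y | (a, y) ∈ R} = ((insert a B : Finset α) : Set α) := by
      intro B hB
      obtain ⟨hB1, hB2⟩ := Finset.mem_powersetCard.1 hB
      have haB : a ∉ B := fun h => by simpa using hB1 h
      obtain ⟨π, hπ⟩ := exists_perm_image {y | (a, y) ∈ R0} ((insert a B : Finset α) : Set α) (by
        rw [hR0.2, Set.ncard_coe_finset, Finset.card_insert_of_notMem haB, hB2])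
      refine ⟨π • R0, hR0.smul π, ?_⟩
      have hU := (hR0.smul π).1
      have h1 : {y | (π a, y) ∈ π • R0} = ((insert a B : Finset α) : Set α) := by
        rw [← hπ]
        ext y
        rw [Set.mem_smul_set_iff_inv_smul_mem]
        change (π a, y) ∈ π • R0 ↔ _
        rw [Set.mem_smul_set_iff_inv_smul_mem]
        change (π⁻¹ (π a), π⁻¹ y) ∈ R0 ↔ (a, π⁻¹ y) ∈ R0
        simp
      have h2 : (π a, a) ∈ π • R0 := by
        have : a ∈ {y | (π a, y) ∈ π • R0} := by rw [h1]; simp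
        exact this
      rw [← h1]
      ext y
      exact ⟨fun h => hU.trans h2 h, fun h => hU.trans (hU.symm h2) h⟩
    choose F hF1 hF2 using hch
    rw [e1, ← Set.ncard_coe_finset]
    refine Set.ncard_le_ncard_of_injOn (fun B => if h : B ∈ (Finset.univ.erase a).powersetCard i then F B h else ∅) ?_ ?_ (Set.toFinite _)
    · intro B hB
      have hB' : B ∈ (Finset.univ.erase a).powersetCard i := hB
      simp only [dif_pos hB']
      exact hF1 B hB'
    · intro B hB C hC hBC
      have hB' : B ∈ (Finset.univ.erase a).powersetCard i := hB
      have hC' : C ∈ (Finset.univ.erase a).powersetCard i := hC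
      simp only [dif_pos hB', dif_pos hC'] at hBC
      have h1 := hF2 B hB'
      have h2 := hF2 C hC'
      rw [hBC, h2] at h1
      have h3 : insert a C = insert a B := by exact_mod_cast h1
      have haB : a ∉ B := fun h => by simpa using (Finset.mem_powersetCard.1 hB').1 h
      have haC : a ∉ C := fun h => by simpa using (Finset.mem_powersetCard.1 hC').1 h
      rw [← Finset.erase_insert haB, ← Finset.erase_insert haC, h3]
  have hpos' : (0 : ℝ) < ((Fintype.card α - 1).choose i : ℝ) := by exact_mod_cast hpos
  gcongr

theorem not_preprim_cases [Nonempty α] (σ τ : Equiv.Perm α)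
    (h : ¬ IsPreprimitive (Subgroup.closure {σ, τ}) α) :
    (∃ i ∈ Finset.Ioo 0 (Fintype.card α), ∃ B : Set α, B.ncard = i ∧ σ • B = B ∧ τ • B = B) ∨
    (∃ i ∈ Finset.Ioo 0 (Fintype.card α - 1), ∃ R : Set (α × α), IsUnif (i + 1) R ∧
      σ • R = R ∧ τ • R = R) := by
  classical
  have hσm : σ ∈ Subgroup.closure {σ, τ} := Subgroup.subset_closure (by simp)
  have hτm : τ ∈ Subgroup.closure {σ, τ} := Subgroup.subset_closure (by simp)
  by_cases ht : IsPretransitive (Subgroup.closure {σ, τ}) α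
  · right
    have hb : ∃ B : Set α, IsBlock (Subgroup.closure {σ, τ}) B ∧ ¬ IsTrivialBlock B := by
      by_contra hcon
      push Not at hcon
      exact h { toIsPretransitive := ht, isTrivialBlock_of_isBlock := fun {B} hB => hcon B hB }
    obtain ⟨B, hB, hBt⟩ := hb
    have hB1 : B.Nontrivial := by
      by_contra hc
      exact hBt (Or.inl (Set.not_nontrivial_iff.1 hc))
    have hB2 : B ≠ Set.univ := fun hc => hBt (Or.inr hc)
    let R : Set (α × α) := {q | ∀ g : Subgroup.closure {σ, τ}, q.1 ∈ g • B ↔ q.2 ∈ g • B}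
    have hinv : ∀ π ∈ Subgroup.closure {σ, τ}, π • R = R := by
      intro π hπ
      ext ⟨x, y⟩
      rw [Set.mem_smul_set_iff_inv_smul_mem]
      let π' : Subgroup.closure {σ, τ} := ⟨π, hπ⟩
      have key : ∀ (g : Subgroup.closure {σ, τ}) (z : α), π⁻¹ z ∈ g • B ↔ z ∈ (π' * g) • B := by
        intro g z
        rw [mul_smul, Set.mem_smul_set_iff_inv_smul_mem (a := π')]
        rfl
      change (∀ g : Subgroup.closure {σ, τ}, π⁻¹ x ∈ g • B ↔ π⁻¹ y ∈ g • B) ↔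
        (∀ g : Subgroup.closure {σ, τ}, x ∈ g • B ↔ y ∈ g • B)
      constructor
      · intro h g
        have := h (π'⁻¹ * g)
        rw [key, key, mul_inv_cancel_left] at this
        exact this
      · intro h g
        rw [key, key]
        exact h _
    have h1 : 1 < B.ncard := Set.one_lt_ncard_iff_nontrivial.2 hB1
    have h2 : B.ncard < Fintype.card α := by
      rw [← Nat.card_eq_fintype_card, ← Set.ncard_univ]
      exact Set.ncard_lt_ncard (Set.ssubset_univ_iff.2 hB2)
    refine ⟨B.ncard - 1, Finset.mem_Ioo.2 ⟨by omega, by omega⟩, R, ⟨⟨?_, ?_, ?_⟩, ?_⟩,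
      hinv σ hσm, hinv τ hτm⟩
    · exact fun x g => Iff.rfl
    · exact fun h g => (h g).symm
    · exact fun h h' g => (h g).trans (h' g)
    · intro x
      obtain ⟨b, hb⟩ := hB1.nonempty
      obtain ⟨g, hg⟩ := ht.exists_smul_eq b x
      have hx : x ∈ g • B := ⟨b, hb, hg⟩
      have : {y | (x, y) ∈ R} = g • B := by
        ext y
        constructor
        · intro hy
          exact (hy g).1 hx
        · intro hy g'
          have heq : ∀ z, z ∈ g • B → z ∈ g' • B → g' • B = g • B := by
            intro z hz hz'
            by_contra hne
            exact Set.disjoint_left.1 (hB hne) hz' hz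
          change x ∈ g' • B ↔ y ∈ g' • B
          constructor
          · intro hx'
            rw [heq x hx hx']; exact hy
          · intro hy'
            rw [heq y hy hy']; exact hx
      rw [this, Set.ncard_smul_set]
      omega
  · left
    have hex : ∃ x y : α, y ∉ orbit (Subgroup.closure {σ, τ}) x := by
      by_contra hcon
      push Not at hcon
      exact ht ⟨fun x y => hcon x y⟩
    obtain ⟨x, y, hy⟩ := hex
    have hinv : ∀ π ∈ Subgroup.closure {σ, τ},
        π • orbit (Subgroup.closure {σ, τ}) x = orbit (Subgroup.closure {σ, τ}) x := by
      intro π hπ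
      exact smul_orbit (⟨π, hπ⟩ : Subgroup.closure {σ, τ}) x
    refine ⟨_, Finset.mem_Ioo.2 ⟨?_, ?_⟩, orbit (Subgroup.closure {σ, τ}) x, rfl,
      hinv σ hσm, hinv τ hτm⟩
    · exact (Set.ncard_pos (Set.toFinite _)).2 ⟨x, mem_orbit_self x⟩
    · rw [← Nat.card_eq_fintype_card, ← Set.ncard_univ]
      exact Set.ncard_lt_ncard (Set.ssubset_univ_iff.2 fun hc => hy (hc ▸ Set.mem_univ y))

theorem choose_two_le (n i : ℕ) (h2 : 2 ≤ i) (hi : i + 2 ≤ n) : n.choose 2 ≤ n.choose i := by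
  have key : ∀ j, 2 ≤ j → j ≤ n / 2 → n.choose 2 ≤ n.choose j := by
    intro j hj
    induction j, hj using Nat.le_induction with
    | base => exact fun _ => le_rfl
    | succ j hj ih =>
      intro h
      exact (ih (by omega)).trans (Nat.choose_le_succ_of_lt_half_left (by omega))
  by_cases h : i ≤ n / 2
  · exact key i h2 h
  · rw [← Nat.choose_symm (by omega : i ≤ n)]
    exact key _ (by omega) (by omega)

theorem sum_inv_choose (n : ℕ) (hn : 2 ≤ n) :
    ∑ i ∈ Finset.Ioo 0 n, (1 : ℝ) / (n.choose i : ℝ) ≤ 4 / ((n : ℝ) - 1) := by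
  have hn' : (2 : ℝ) ≤ n := by exact_mod_cast hn
  have hb : ∀ i ∈ Finset.Ioo 0 n, (1 : ℝ) / (n.choose i : ℝ) ≤
      (if i = 1 then 1 / (n : ℝ) else 0) + (if i = n - 1 then 1 / (n : ℝ) else 0) +
        2 / (n * (n - 1)) := by
    intro i hi
    obtain ⟨hi0, hin⟩ := Finset.mem_Ioo.1 hi
    have hnn : (0 : ℝ) ≤ 2 / (n * (n - 1)) := by
      apply div_nonneg (by norm_num); nlinarith
    by_cases h1 : i = 1
    · subst h1
      rw [if_pos rfl, Nat.choose_one_right]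
      have : (0 : ℝ) ≤ (if 1 = n - 1 then 1 / (n : ℝ) else 0) := by positivity
      linarith
    · by_cases h2 : i = n - 1
      · rw [if_neg h1, if_pos h2, h2, Nat.choose_symm (by omega : 1 ≤ n), Nat.choose_one_right]
        linarith
      · rw [if_neg h1, if_neg h2, zero_add, zero_add]
        have h3 := choose_two_le n i (by omega) (by omega)
        have h4 : ((n.choose 2 : ℕ) : ℝ) = n * (n - 1) / 2 := Nat.cast_choose_two ℝ n
        have h5 : (n : ℝ) * (n - 1) / 2 ≤ (n.choose i : ℝ) := by
          rw [← h4]; exact_mod_cast h3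
        have h6 : (0 : ℝ) < n * (n - 1) / 2 := by nlinarith
        calc (1 : ℝ) / (n.choose i : ℝ) ≤ 1 / (n * (n - 1) / 2) := by gcongr
          _ = _ := by rw [one_div_div]
  refine (Finset.sum_le_sum hb).trans ?_
  rw [Finset.sum_add_distrib, Finset.sum_add_distrib, Finset.sum_ite_eq', Finset.sum_ite_eq',
    Finset.sum_const, Nat.card_Ioo, if_pos (Finset.mem_Ioo.2 ⟨by omega, by omega⟩),
    if_pos (Finset.mem_Ioo.2 ⟨by omega, by omega⟩), nsmul_eq_mul]
  rw [show n - 0 - 1 = n - 1 by omega, Nat.cast_sub (by omega)]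
  have hm : (0 : ℝ) < (n : ℝ) - 1 := by linarith
  have hn0 : (0 : ℝ) < n := by linarith
  have e : ((n : ℝ) - (1 : ℕ)) * (2 / (n * (n - 1))) = 2 / n := by
    push_cast
    field_simp
  rw [e]
  have : (1 : ℝ) / n ≤ 1 / (n - 1) := by
    apply one_div_le_one_div_of_le hm; linarith
  have e2 : (4 : ℝ) / (n - 1) = 4 * (1 / (n - 1)) := by ring
  have e3 : (2 : ℝ) / n = 2 * (1 / n) := by ring
  rw [e2, e3]
  linarith

theorem not_preprim_bound (k : ℕ) (hk : 3 ≤ k) :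
    ({p : Equiv.Perm (Fin k) × Equiv.Perm (Fin k) |
      ¬ IsPreprimitive (Subgroup.closure {p.1, p.2}) (Fin k)}.ncard : ℝ) ≤
      (k.factorial : ℝ) ^ 2 * (8 / ((k : ℝ) - 2)) := by
  classical
  have : Nonempty (Fin k) := ⟨⟨0, by omega⟩⟩
  have hk3 : (3 : ℝ) ≤ k := by exact_mod_cast hk
  let U (i : ℕ) : Set (Equiv.Perm (Fin k) × Equiv.Perm (Fin k)) :=
    {p | ∃ B : Set (Fin k), B.ncard = i ∧ p.1 • B = B ∧ p.2 • B = B}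
  let V (i : ℕ) : Set (Equiv.Perm (Fin k) × Equiv.Perm (Fin k)) :=
    {p | ∃ R : Set (Fin k × Fin k), IsUnif (i + 1) R ∧ p.1 • R = R ∧ p.2 • R = R}
  have hsub : {p : Equiv.Perm (Fin k) × Equiv.Perm (Fin k) |
      ¬ IsPreprimitive (Subgroup.closure {p.1, p.2}) (Fin k)} ⊆
      (⋃ i ∈ Finset.Ioo 0 k, U i) ∪ ⋃ i ∈ Finset.Ioo 0 (k - 1), V i := by
    rintro ⟨σ, τ⟩ hp
    rcases not_preprim_cases σ τ hp with ⟨i, hi, h⟩ | ⟨i, hi, h⟩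
    · left
      rw [Fintype.card_fin] at hi
      simp only [Set.mem_iUnion]
      exact ⟨i, hi, h⟩
    · right
      rw [Fintype.card_fin] at hi
      simp only [Set.mem_iUnion]
      exact ⟨i, hi, h⟩
  have h1 := (Set.ncard_le_ncard hsub (Set.toFinite _)).trans ((Set.ncard_union_le _ _).trans
    (add_le_add (Finset.set_ncard_biUnion_le _ _) (Finset.set_ncard_biUnion_le _ _)))
  have h2 : ({p : Equiv.Perm (Fin k) × Equiv.Perm (Fin k) |
      ¬ IsPreprimitive (Subgroup.closure {p.1, p.2}) (Fin k)}.ncard : ℝ) ≤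
      ∑ i ∈ Finset.Ioo 0 k, ((U i).ncard : ℝ) + ∑ i ∈ Finset.Ioo 0 (k - 1), ((V i).ncard : ℝ) := by
    exact_mod_cast h1
  refine h2.trans ?_
  have h3 : ∑ i ∈ Finset.Ioo 0 k, ((U i).ncard : ℝ) ≤ (k.factorial : ℝ) ^ 2 * (4 / ((k : ℝ) - 1)) := by
    calc _ ≤ ∑ i ∈ Finset.Ioo 0 k, (k.factorial : ℝ) ^ 2 * (1 / (k.choose i : ℝ)) := by
          refine Finset.sum_le_sum fun i hi => ?_
          have := subset_pairs_bound (α := Fin k) i (by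
            rw [Fintype.card_fin]; exact (Finset.mem_Ioo.1 hi).2.le)
          rw [Fintype.card_fin] at this
          rw [mul_one_div]
          exact this
      _ ≤ _ := by
          rw [← Finset.mul_sum]
          gcongr
          exact sum_inv_choose k (by omega)
  have h4 : ∑ i ∈ Finset.Ioo 0 (k - 1), ((V i).ncard : ℝ) ≤
      (k.factorial : ℝ) ^ 2 * (4 / ((k : ℝ) - 2)) := by
    calc _ ≤ ∑ i ∈ Finset.Ioo 0 (k - 1), (k.factorial : ℝ) ^ 2 * (1 / ((k - 1).choose i : ℝ)) := by
          refine Finset.sum_le_sum fun i hi => ?_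
          have := block_pairs_bound (α := Fin k) i (by
            rw [Fintype.card_fin]; have := (Finset.mem_Ioo.1 hi).2; omega)
          rw [Fintype.card_fin] at this
          rw [mul_one_div]
          exact this
      _ ≤ _ := by
          rw [← Finset.mul_sum]
          gcongr
          have := sum_inv_choose (k - 1) (by omega)
          rw [Nat.cast_sub (by omega)] at this
          refine this.trans (le_of_eq ?_)
          push_cast
          ring
  have h5 : (4 : ℝ) / (k - 1) ≤ 4 / (k - 2) := by
    apply div_le_div_of_nonneg_left <;> linarith
  have h6 : (8 : ℝ) / (k - 2) = 4 / (k - 2) + 4 / (k - 2) := by ring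
  rw [h6, mul_add]
  refine add_le_add (h3.trans ?_) h4
  gcongr

end PartC

section PartE
open Equiv Equiv.Perm MulAction
open scoped Nat

theorem fiber_bound {S : Type*} [Finite S] (T : S → Set S) (M : ℝ)
    (hT : ∀ s, ((T s).ncard : ℝ) ≤ M) :
    ({p : S × S | p.2 ∈ T p.1}.ncard : ℝ) ≤ Nat.card S * M := by
  classical
  have := Fintype.ofFinite S
  have hsub : {p : S × S | p.2 ∈ T p.1} ⊆
      ⋃ s ∈ (Finset.univ : Finset S), (Prod.mk s '' (T s)) := by
    rintro ⟨s, t⟩ h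
    simp only [Set.mem_iUnion]
    exact ⟨s, Finset.mem_univ _, t, h, rfl⟩
  have h1 := (Set.ncard_le_ncard hsub (Set.toFinite _)).trans (Finset.set_ncard_biUnion_le _ _)
  have h2 : ({p : S × S | p.2 ∈ T p.1}.ncard : ℝ) ≤
      ∑ s : S, ((Prod.mk s '' (T s)).ncard : ℝ) := by exact_mod_cast h1
  refine h2.trans ?_
  refine (Finset.sum_le_sum (g := fun _ => M) fun s _ => ?_).trans ?_
  · refine le_trans ?_ (hT s)
    exact_mod_cast Set.ncard_image_le (Set.toFinite _)
  · rw [Finset.sum_const, nsmul_eq_mul, Finset.card_univ, Nat.card_eq_fintype_card]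

theorem even_card (k : ℕ) (hk : 2 ≤ k) :
    ({p : Perm (Fin k) × Perm (Fin k) | p.1 ∈ alternatingGroup (Fin k) ∧
      p.2 ∈ alternatingGroup (Fin k)}.ncard : ℝ) = (k ! : ℝ) ^ 2 / 4 := by
  have : Nontrivial (Fin k) := Fin.nontrivial_iff_two_le.2 hk
  have h1 : {p : Perm (Fin k) × Perm (Fin k) | p.1 ∈ alternatingGroup (Fin k) ∧
      p.2 ∈ alternatingGroup (Fin k)} =
      ((alternatingGroup (Fin k) : Set (Perm (Fin k))) ×ˢ
        (alternatingGroup (Fin k) : Set (Perm (Fin k)))) := rfl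
  have h2 : ((alternatingGroup (Fin k) : Set (Perm (Fin k))).ncard : ℝ) = k ! / 2 := by
    have h := two_mul_nat_card_alternatingGroup (α := Fin k)
    rw [Nat.card_perm, Nat.card_eq_fintype_card (α := Fin k), Fintype.card_fin] at h
    have h' : (2 : ℝ) * ((alternatingGroup (Fin k) : Set (Perm (Fin k))).ncard : ℝ) = k ! := by
      exact_mod_cast h
    linarith
  rw [h1, Set.ncard_prod]
  push_cast
  rw [h2]
  ring

theorem upper_count (k : ℕ) (hk : 2 ≤ k) :
    ({p : Perm (Fin k) × Perm (Fin k) | Subgroup.closure {(p.1, p.2), (p.2, p.1)} =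
      (alternatingGroup (Fin k)).prod (alternatingGroup (Fin k))}.ncard : ℝ) ≤
      (k ! : ℝ) ^ 2 / 4 := by
  rw [← even_card k hk]
  have : {p : Perm (Fin k) × Perm (Fin k) | Subgroup.closure {(p.1, p.2), (p.2, p.1)} =
      (alternatingGroup (Fin k)).prod (alternatingGroup (Fin k))} ⊆
      {p : Perm (Fin k) × Perm (Fin k) | p.1 ∈ alternatingGroup (Fin k) ∧
      p.2 ∈ alternatingGroup (Fin k)} := by
    rintro ⟨σ, τ⟩ h
    have h0 : Subgroup.closure {(σ, τ), (τ, σ)} =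
      (alternatingGroup (Fin k)).prod (alternatingGroup (Fin k)) := h
    have h1 : (σ, τ) ∈ Subgroup.closure {(σ, τ), (τ, σ)} := Subgroup.subset_closure (by simp)
    rw [h0] at h1
    exact Subgroup.mem_prod.1 h1
  exact_mod_cast Set.ncard_le_ncard this (Set.toFinite _)

theorem lower_count (k a N : ℕ) (hk : 5 ≤ k) (ha : 1 ≤ a) (hN : 2 * N ≤ k + 2) (μ H : ℝ)
    (hμ : 0 < μ) (hμs : μ ≤ ∑ p ∈ (Finset.Ioo a N).filter Nat.Prime, (1 : ℝ) / p)
    (hH : ∑ j ∈ Finset.Icc 1 k, (1 : ℝ) / j ≤ H) :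
    (k ! : ℝ) ^ 2 / 4 ≤ ({p : Perm (Fin k) × Perm (Fin k) |
      Subgroup.closure {(p.1, p.2), (p.2, p.1)} =
      (alternatingGroup (Fin k)).prod (alternatingGroup (Fin k))}.ncard : ℝ) +
      (k ! : ℝ) ^ 2 * (8 / ((k : ℝ) - 2) + 1 / μ + 3 * H / a) := by
  classical
  set P := (Finset.Ioo a N).filter Nat.Prime with hPdef
  have hP : ∀ p ∈ P, p.Prime ∧ a < p ∧ 2 * p ≤ k := by
    intro p hp
    rw [hPdef, Finset.mem_filter, Finset.mem_Ioo] at hp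
    exact ⟨hp.2, hp.1.1, by omega⟩
  have ha0 : (0 : ℝ) < a := by exact_mod_cast ha
  have hf0 : (0 : ℝ) < k ! := by exact_mod_cast Nat.factorial_pos k
  have hH0 : 0 ≤ H := le_trans (Finset.sum_nonneg fun j _ => by positivity) hH
  have hcard : (Nat.card (Perm (Fin k)) : ℝ) = k ! := by
    rw [Nat.card_perm, Nat.card_eq_fintype_card, Fintype.card_fin]
  let Good : Set (Perm (Fin k) × Perm (Fin k)) := {p |
      Subgroup.closure {(p.1, p.2), (p.2, p.1)} =
      (alternatingGroup (Fin k)).prod (alternatingGroup (Fin k))}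
  let B1 : Set (Perm (Fin k) × Perm (Fin k)) := {p |
      ¬ IsPreprimitive (Subgroup.closure {p.1, p.2}) (Fin k)}
  let N0 : Finset (Perm (Fin k)) := Finset.univ.filter (fun σ : Perm (Fin k) =>
    ∀ c ∈ σ.cycleFactorsFinset, c.support.card ∉ P)
  let D0 : Finset (Perm (Fin k)) := Finset.univ.filter (fun σ : Perm (Fin k) =>
    ∃ p ∈ P, ∃ c ∈ σ.cycleFactorsFinset, ∃ d ∈ σ.cycleFactorsFinset,
      c ≠ d ∧ c.support.card = p ∧ p ∣ d.support.card)
  let T : Perm (Fin k) → Set (Perm (Fin k)) := fun σ =>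
    {τ | ∃ h : (∃ c ∈ σ.cycleFactorsFinset, c.support.card ∈ P),
      ∃ d ∈ τ.cycleFactorsFinset, h.choose.support.card ∣ d.support.card}
  have hsub : {p : Perm (Fin k) × Perm (Fin k) | p.1 ∈ alternatingGroup (Fin k) ∧
      p.2 ∈ alternatingGroup (Fin k)} ⊆ Good ∪ (B1 ∪ (((N0 : Set (Perm (Fin k))) ×ˢ Set.univ) ∪
        (((D0 : Set (Perm (Fin k))) ×ˢ Set.univ) ∪ {p | p.2 ∈ T p.1}))) := by
    rintro ⟨σ, τ⟩ ⟨hσ, hτ⟩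
    by_contra hcon
    simp only [Set.mem_union, not_or] at hcon
    obtain ⟨hg, hb1, hn0, hd0, ht⟩ := hcon
    have hprim : IsPreprimitive (Subgroup.closure {σ, τ}) (Fin k) := by
      by_contra h
      exact hb1 h
    have hex : ∃ c ∈ σ.cycleFactorsFinset, c.support.card ∈ P := by
      by_contra h
      push Not at h
      exact hn0 ⟨Finset.mem_coe.2 (Finset.mem_filter.2 ⟨Finset.mem_univ _, h⟩), Set.mem_univ _⟩
    obtain ⟨hc1, hc2⟩ := hex.choose_spec
    apply hg
    refine circ_good hk hσ hτ hprim (hP _ hc2).1 (hP _ hc2).2.2 hc1 rfl ?_ ?_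
    · intro d hd hdc hdiv
      exact hd0 ⟨Finset.mem_coe.2 (Finset.mem_filter.2 ⟨Finset.mem_univ _,
        _, hc2, _, hc1, d, hd, hdc.symm, rfl, hdiv⟩), Set.mem_univ _⟩
    · intro d hd hdiv
      exact ht ⟨hex, d, hd, hdiv⟩
  have hcount := (Set.ncard_le_ncard hsub (Set.toFinite _)).trans ((Set.ncard_union_le _ _).trans
    (add_le_add le_rfl ((Set.ncard_union_le _ _).trans (add_le_add le_rfl
      ((Set.ncard_union_le _ _).trans (add_le_add le_rfl (Set.ncard_union_le _ _)))))))
  have hcount' : ({p : Perm (Fin k) × Perm (Fin k) | p.1 ∈ alternatingGroup (Fin k) ∧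
      p.2 ∈ alternatingGroup (Fin k)}.ncard : ℝ) ≤ Good.ncard + (B1.ncard +
      (((N0 : Set (Perm (Fin k))) ×ˢ (Set.univ : Set (Perm (Fin k)))).ncard +
      (((D0 : Set (Perm (Fin k))) ×ˢ (Set.univ : Set (Perm (Fin k)))).ncard +
      {p : Perm (Fin k) × Perm (Fin k) | p.2 ∈ T p.1}.ncard))) := by
    exact_mod_cast hcount
  rw [even_card k (by omega), Set.ncard_prod, Set.ncard_prod, Set.ncard_univ,
    Set.ncard_coe_finset, Set.ncard_coe_finset] at hcount'
  push_cast at hcount'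
  rw [hcard] at hcount'
  have hb1 : (B1.ncard : ℝ) ≤ (k ! : ℝ) ^ 2 * (8 / ((k : ℝ) - 2)) :=
    not_preprim_bound k (by omega)
  have hn0 : (N0.card : ℝ) ≤ k ! * (1 / μ) := by
    have h := no_cycle_bound (α := Fin k) P (fun l hl => ⟨(hP l hl).1.two_le, by
      rw [Fintype.card_fin]; have := (hP l hl).2.2; omega⟩)
    rw [Fintype.card_fin] at h
    rw [mul_one_div, le_div_iff₀ hμ]
    exact (mul_le_mul_of_nonneg_left hμs (Nat.cast_nonneg _)).trans h
  have hd0 : (D0.card : ℝ) ≤ k ! * (2 * H / a) := by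
    have h := dup_bound (α := Fin k) P (fun l hl => (hP l hl).1.two_le)
    rw [Fintype.card_fin] at h
    have hs : ∑ p ∈ P, (1 : ℝ) / p ^ 2 ≤ 2 / a := by
      calc ∑ p ∈ P, (1 : ℝ) / p ^ 2 ≤ ∑ p ∈ Finset.Ioo a N, (1 : ℝ) / p ^ 2 :=
            Finset.sum_le_sum_of_subset_of_nonneg (Finset.filter_subset _ _)
              (fun _ _ _ => by positivity)
        _ = ∑ p ∈ Finset.Ioo a N, ((p : ℝ) ^ 2)⁻¹ := by simp only [one_div]
        _ ≤ 2 / (a + 1) := sum_Ioo_inv_sq_le a N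
        _ ≤ 2 / a := by
            apply div_le_div_of_nonneg_left <;> linarith
    refine h.trans ?_
    calc _ ≤ (k ! : ℝ) * H * (2 / a) := by
          apply mul_le_mul _ hs (Finset.sum_nonneg fun _ _ => by positivity) (by positivity)
          exact mul_le_mul_of_nonneg_left hH hf0.le
      _ = _ := by ring
  have hT : ({p : Perm (Fin k) × Perm (Fin k) | p.2 ∈ T p.1}.ncard : ℝ) ≤ k ! * (k ! * (H / a)) := by
    rw [← hcard]
    apply fiber_bound
    intro σ
    rw [hcard]
    by_cases hex : ∃ c ∈ σ.cycleFactorsFinset, c.support.card ∈ P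
    · obtain ⟨hc1, hc2⟩ := hex.choose_spec
      have h := div_bound (α := Fin k) hex.choose.support.card (hP _ hc2).1.two_le
      rw [Fintype.card_fin, ← Set.ncard_coe_finset] at h
      have hTs : T σ ⊆ ((Finset.univ.filter (fun τ : Perm (Fin k) =>
          ∃ c ∈ τ.cycleFactorsFinset, hex.choose.support.card ∣ c.support.card) :
            Finset (Perm (Fin k))) : Set (Perm (Fin k))) := by
        rintro τ ⟨_, h⟩
        exact Finset.mem_coe.2 (Finset.mem_filter.2 ⟨Finset.mem_univ _, h⟩)
      have h1 : ((T σ).ncard : ℝ) ≤ _ := Nat.cast_le.2 (Set.ncard_le_ncard hTs (Set.toFinite _))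
      refine h1.trans (h.trans ?_)
      rw [mul_div_assoc]
      have hap : (a : ℝ) ≤ (hex.choose.support.card : ℝ) := by
        exact_mod_cast (hP _ hc2).2.1.le
      gcongr
    · have : T σ = ∅ := by
        ext τ
        simp only [Set.mem_empty_iff_false, iff_false]
        rintro ⟨h, -⟩
        exact hex h
      rw [this]
      simp only [Set.ncard_empty, Nat.cast_zero]
      positivity
  have hn0' := mul_le_mul_of_nonneg_right hn0 hf0.le
  have hd0' := mul_le_mul_of_nonneg_right hd0 hf0.le
  have e : (k ! : ℝ) ^ 2 * (8 / ((k : ℝ) - 2) + 1 / μ + 3 * H / a) =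
      (k ! : ℝ) ^ 2 * (8 / ((k : ℝ) - 2)) + (k ! * (1 / μ) * k ! + (k ! * (2 * H / a) * k ! +
        k ! * (k ! * (H / a)))) := by ring
  rw [e]
  refine hcount'.trans ?_
  change (Good.ncard : ℝ) + _ ≤ Good.ncard + _
  linarith

/-- the fourth root of `log k` -/
noncomputable def tfun (k : ℕ) : ℝ := √(√(Real.log k))

theorem tfun_tendsto : Filter.Tendsto tfun Filter.atTop Filter.atTop :=
  Real.tendsto_sqrt_atTop.comp (Real.tendsto_sqrt_atTop.comp
    (Real.tendsto_log_atTop.comp tendsto_natCast_atTop_atTop))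

theorem final_lower (k : ℕ) (hk : 32 ≤ k) (ht : 16 ≤ tfun k)
    (hlog : Real.log k ^ 2 ≤ k / 8) :
    (k ! : ℝ) ^ 2 / 4 ≤ ({p : Perm (Fin k) × Perm (Fin k) |
      Subgroup.closure {(p.1, p.2), (p.2, p.1)} =
      (alternatingGroup (Fin k)).prod (alternatingGroup (Fin k))}.ncard : ℝ) +
      (k ! : ℝ) ^ 2 * (8 / ((k : ℝ) - 2) + 2 / Real.log (tfun k / 8) + 6 / tfun k ^ 2) := by
  set t := tfun k with htd
  have hk' : (32 : ℝ) ≤ k := by exact_mod_cast hk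
  have hl0 : 0 ≤ Real.log k := Real.log_nonneg (by linarith)
  have ht4 : t ^ 4 = Real.log k := by
    rw [htd, tfun, show (4 : ℕ) = 2 * 2 by norm_num, pow_mul, Real.sq_sqrt (Real.sqrt_nonneg _),
      Real.sq_sqrt hl0]
  let a : ℕ := ⌈t ^ 6⌉₊
  have ht0 : 0 < t := by linarith
  have ht1 : 1 ≤ t := by linarith
  have ha1 : t ^ 6 ≤ a := Nat.le_ceil _
  have ha2 : (a : ℝ) < t ^ 6 + 1 := Nat.ceil_lt_add_one (by positivity)
  have h6 : 1 ≤ t ^ 6 := one_le_pow₀ ht1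
  have ha : 1 ≤ a := by
    have : (1 : ℝ) ≤ a := h6.trans ha1
    exact_mod_cast this
  have h68 : t ^ 6 ≤ k / 8 := by
    calc t ^ 6 ≤ t ^ 8 := pow_le_pow_right₀ ht1 (by norm_num)
      _ = (t ^ 4) ^ 2 := by ring
      _ ≤ _ := by rw [ht4]; exact hlog
  have haN : a + 1 ≤ k / 2 + 1 := by
    have h1 : (2 * a : ℝ) ≤ k := by linarith
    have h2 : 2 * a ≤ k := by exact_mod_cast h1
    omega
  have hps := prime_sum_lower a (k / 2 + 1) ha haN
  have hlogN : t ^ 4 / 2 ≤ Real.log ((k / 2 + 1 : ℕ) : ℝ) := by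
    have h1 : (k : ℝ) / 2 ≤ ((k / 2 + 1 : ℕ) : ℝ) := by
      have : k ≤ 2 * (k / 2 + 1) := by omega
      have : (k : ℝ) ≤ 2 * ((k / 2 + 1 : ℕ) : ℝ) := by exact_mod_cast this
      linarith
    have h2 : √(k : ℝ) ≤ k / 2 := by
      rw [Real.sqrt_le_left (by positivity)]
      nlinarith
    rw [ht4, ← Real.log_sqrt (by positivity)]
    exact Real.log_le_log (by positivity) (h2.trans h1)
  have hsq : 2 * √(a : ℝ) ≤ 4 * t ^ 3 := by
    have : √(a : ℝ) ≤ 2 * t ^ 3 := by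
      rw [Real.sqrt_le_left (by positivity)]
      nlinarith
    linarith
  have hsq0 : 0 < 2 * √(a : ℝ) := by
    have : (0 : ℝ) < a := by exact_mod_cast ha
    positivity
  have hrat : t / 8 ≤ Real.log ((k / 2 + 1 : ℕ) : ℝ) / (2 * √(a : ℝ)) := by
    rw [le_div_iff₀ hsq0]
    calc t / 8 * (2 * √(a : ℝ)) ≤ t / 8 * (4 * t ^ 3) := by gcongr
      _ = t ^ 4 / 2 := by ring
      _ ≤ _ := hlogN
  have hμ : 0 < Real.log (t / 8) := Real.log_pos (by linarith)
  have hμs := (Real.log_le_log (by positivity) hrat).trans hps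
  have h := lower_count k a (k / 2 + 1) (by omega) ha (by omega) (Real.log (t / 8) / 2)
    (1 + Real.log k) (by positivity) (by linarith) (by
      have := harmonic_le_one_add_log k
      rw [harmonic_eq_sum_Icc] at this
      push_cast at this
      simp only [one_div]
      exact this)
  refine h.trans ?_
  have e1 : 1 / (Real.log (t / 8) / 2) = 2 / Real.log (t / 8) := by rw [one_div_div]
  have e2 : 3 * (1 + Real.log k) / a ≤ 6 / t ^ 2 := by
    have h4 : 1 ≤ t ^ 4 := one_le_pow₀ ht1
    calc 3 * (1 + Real.log k) / a ≤ 3 * (2 * t ^ 4) / t ^ 6 := by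
          gcongr
          rw [← ht4]; linarith
      _ = 6 / t ^ 2 := by field_simp; norm_num
  rw [e1]
  gcongr

end PartE

/-- The group circularly generated by a pair of uniformly random permutations of `k`
points equals `A_k × A_k` with probability tending to `1/4`. -/
theorem circGenPair_alternating_probability :
    Filter.Tendsto
      (fun k : ℕ =>
        (Nat.card {p : Equiv.Perm (Fin k) × Equiv.Perm (Fin k) //
            circGenPair p.1 p.2 =
              (alternatingGroup (Fin k)).prod (alternatingGroup (Fin k))} : ℝ) /
          (Nat.factorial k : ℝ) ^ 2)
      Filter.atTop (nhds (1 / 4)) := by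
  have hlow : Filter.Tendsto (fun k : ℕ => (1 / 4 : ℝ) -
      (8 / ((k : ℝ) - 2) + 2 / Real.log (tfun k / 8) + 6 / tfun k ^ 2))
      Filter.atTop (nhds (1 / 4)) := by
    have h1 : Filter.Tendsto (fun k : ℕ => 8 / ((k : ℝ) - 2)) Filter.atTop (nhds 0) :=
      Filter.Tendsto.const_div_atTop
        (Filter.tendsto_atTop_add_const_right _ (-2 : ℝ) tendsto_natCast_atTop_atTop) 8
    have h2 : Filter.Tendsto (fun k : ℕ => 2 / Real.log (tfun k / 8)) Filter.atTop (nhds 0) :=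
      Filter.Tendsto.const_div_atTop
        (Real.tendsto_log_atTop.comp (tfun_tendsto.atTop_div_const (by norm_num))) 2
    have h3 : Filter.Tendsto (fun k : ℕ => 6 / tfun k ^ 2) Filter.atTop (nhds 0) :=
      Filter.Tendsto.const_div_atTop
        ((Filter.tendsto_pow_atTop (by norm_num)).comp tfun_tendsto) 6
    have h4 := (tendsto_const_nhds (x := (1 / 4 : ℝ))).sub ((h1.add h2).add h3)
    simpa using h4
  have hlogev : ∀ᶠ k : ℕ in Filter.atTop, Real.log k ^ 2 ≤ (k : ℝ) / 8 := by
    have h := (Real.isLittleO_pow_log_id_atTop (n := 2)).bound (by norm_num : (0 : ℝ) < 1 / 8)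
    filter_upwards [tendsto_natCast_atTop_atTop.eventually h] with k hk
    simp only [id, Real.norm_eq_abs, Nat.abs_cast] at hk
    rw [abs_of_nonneg (by positivity)] at hk
    linarith
  refine tendsto_of_tendsto_of_tendsto_of_le_of_le' hlow tendsto_const_nhds ?_ ?_
  · filter_upwards [hlogev, tfun_tendsto.eventually_ge_atTop 16, Filter.eventually_ge_atTop 32]
      with k h1 h2 h3
    have hf0 : (0 : ℝ) < k.factorial := by exact_mod_cast Nat.factorial_pos k
    have h := final_lower k h3 h2 h1
    rw [le_div_iff₀ (by positivity)]
    rw [sub_mul, sub_le_iff_le_add]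
    refine le_trans (le_of_eq (by ring)) (h.trans (le_of_eq ?_))
    exact congrArg₂ (· + ·) rfl (mul_comm _ _)
  · filter_upwards [Filter.eventually_ge_atTop 2] with k hk
    have hf0 : (0 : ℝ) < k.factorial := by exact_mod_cast Nat.factorial_pos k
    rw [div_le_iff₀ (by positivity)]
    refine le_trans (upper_count k hk) (le_of_eq (by ring))
end

section
/- Let k ≥ 7 and let σ₀, σ₁, σ₂ ∈ Equiv.Perm (Fin k) be permutations that do not all have the same order (i.e. ¬(orderOf σ₀ = orderOf σ₁ ∧ orderOf σ₁ = orderOf σ₂)) and such that Subgroup.closure {σ₀, σ₁, σ₂} = ⊤ or Subgroup.closure {σ₀, σ₁, σ₂} = alternatingGroup (Fin k). Then there exists a prime p and a p-cycle π ∈ Equiv.Perm (Fin k) such that (1, 1, π) belongs to the group circularly generated by the triple (σ₀, σ₁, σ₂), i.e. the subgroup of Equiv.Perm (Fin k) × Equiv.Perm (Fin k) × Equiv.Perm (Fin k) generated by (σ₀, σ₁, σ₂), (σ₁, σ₂, σ₀) and (σ₂, σ₀, σ₁). -/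
open Equiv in
lemma alt_le_of_normalized {k : ℕ} (hk : 7 ≤ k) (G N : Subgroup (Perm (Fin k)))
    (hG : G = ⊤ ∨ G = alternatingGroup (Fin k)) (hNG : N ≤ G)
    (hn : ∀ g ∈ G, ∀ n ∈ N, g * n * g⁻¹ ∈ N) (hN : ∃ n ∈ N, n ≠ 1) :
    alternatingGroup (Fin k) ≤ N := by
  have hc : 5 ≤ Nat.card (Fin k) := by simp; omega
  obtain ⟨n, hnN, hn1⟩ := hN
  rcases hG with rfl | rfl
  · haveI : N.Normal := ⟨fun n hnn g => hn g trivial n hnn⟩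
    exact Equiv.Perm.alternatingGroup_le_of_normal hc
      ⟨⟨⟨n, hnN⟩, 1, fun h => hn1 (congrArg Subtype.val h)⟩⟩
  · haveI : (N.subgroupOf (alternatingGroup (Fin k))).Normal :=
      ⟨fun n hnn g => hn g g.2 n hnn⟩
    rcases alternatingGroup.normal_subgroup_eq_bot_or_eq_top hc
      (N := N.subgroupOf (alternatingGroup (Fin k))) with h | h
    · exfalso
      have h2 : (⟨n, hNG hnN⟩ : alternatingGroup (Fin k)) ∈
          N.subgroupOf (alternatingGroup (Fin k)) := hnN
      rw [h, Subgroup.mem_bot] at h2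
      exact hn1 (congrArg Subtype.val h2)
    · exact Subgroup.subgroupOf_eq_top.mp h

/-- If three permutations of `k ≥ 7` points do not all have the same order and
generate `S_k` or `A_k`, then the group circularly generated by the triple contains
`(1, 1, π)` for some prime-length cycle `π`. -/
theorem exists_cycle_mem_circGenTriple {k : ℕ} (hk : 7 ≤ k)
    (σ₀ σ₁ σ₂ : Equiv.Perm (Fin k))
    (horder : ¬(orderOf σ₀ = orderOf σ₁ ∧ orderOf σ₁ = orderOf σ₂))
    (hgen : Subgroup.closure {σ₀, σ₁, σ₂} = ⊤ ∨
      Subgroup.closure {σ₀, σ₁, σ₂} = alternatingGroup (Fin k)) :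
    ∃ (p : ℕ) (π : Equiv.Perm (Fin k)), p.Prime ∧ π.IsCycle ∧ π.support.card = p ∧
      (1, 1, π) ∈
        Subgroup.closure {((σ₀, σ₁, σ₂) :
            Equiv.Perm (Fin k) × Equiv.Perm (Fin k) × Equiv.Perm (Fin k)),
          (σ₁, σ₂, σ₀), (σ₂, σ₀, σ₁)} := by
  set G := Subgroup.closure {σ₀, σ₁, σ₂} with hGdef
  set H := Subgroup.closure {((σ₀, σ₁, σ₂) :
            Equiv.Perm (Fin k) × Equiv.Perm (Fin k) × Equiv.Perm (Fin k)),
          (σ₁, σ₂, σ₀), (σ₂, σ₀, σ₁)} with hH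
  have g0 : (σ₀, σ₁, σ₂) ∈ H := Subgroup.subset_closure (by simp)
  have g1 : (σ₁, σ₂, σ₀) ∈ H := Subgroup.subset_closure (by simp)
  have g2 : (σ₂, σ₀, σ₁) ∈ H := Subgroup.subset_closure (by simp)
  have s0 : σ₀ ∈ G := Subgroup.subset_closure (by simp)
  have s1 : σ₁ ∈ G := Subgroup.subset_closure (by simp)
  have s2 : σ₂ ∈ G := Subgroup.subset_closure (by simp)
  have cyc : ∀ x ∈ H, (x.2.1, x.2.2, x.1) ∈ H := by
    intro x hx
    induction hx using Subgroup.closure_induction with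
    | mem x hx =>
      rcases hx with rfl | rfl | rfl
      exacts [g1, g2, g0]
    | one => exact H.one_mem
    | mul x y _ _ h1 h2 => exact H.mul_mem h1 h2
    | inv x _ h1 => exact H.inv_mem h1
  have cyc' : ∀ a b c, (a, b, c) ∈ H → (b, c, a) ∈ H := fun a b c h => cyc _ h
  have inG : ∀ x ∈ H, x.1 ∈ G := by
    intro x hx
    induction hx using Subgroup.closure_induction with
    | mem x hx =>
      rcases hx with rfl | rfl | rfl
      exacts [s0, s1, s2]
    | one => exact G.one_mem
    | mul x y _ _ h1 h2 => exact G.mul_mem h1 h2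
    | inv x _ h1 => exact G.inv_mem h1
  have surj : ∀ g ∈ G, ∃ b c, (g, b, c) ∈ H := by
    intro g hg
    induction hg using Subgroup.closure_induction with
    | mem x hx =>
      rcases hx with rfl | rfl | rfl
      exacts [⟨_, _, g0⟩, ⟨_, _, g1⟩, ⟨_, _, g2⟩]
    | one => exact ⟨1, 1, H.one_mem⟩
    | mul x y _ _ h1 h2 =>
      obtain ⟨b, c, h⟩ := h1
      obtain ⟨b', c', h'⟩ := h2
      exact ⟨_, _, H.mul_mem h h'⟩
    | inv x _ h1 =>
      obtain ⟨b, c, h⟩ := h1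
      exact ⟨_, _, H.inv_mem h⟩
  -- a 3-cycle in the alternating group and a non-commuting partner
  let i0 : Fin k := ⟨0, by omega⟩
  let i1 : Fin k := ⟨1, by omega⟩
  let i2 : Fin k := ⟨2, by omega⟩
  let i3 : Fin k := ⟨3, by omega⟩
  have n01 : i0 ≠ i1 := by simp [i0, i1]
  have n02 : i0 ≠ i2 := by simp [i0, i2]
  have n03 : i0 ≠ i3 := by simp [i0, i3]
  have n12 : i1 ≠ i2 := by simp [i1, i2]
  have n13 : i1 ≠ i3 := by simp [i1, i3]
  have n23 : i2 ≠ i3 := by simp [i2, i3]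
  have t1 := Equiv.Perm.isThreeCycle_swap_mul_swap_same n01 n02 n12
  have t2 := Equiv.Perm.isThreeCycle_swap_mul_swap_same n01 n03 n13
  set τ := Equiv.swap i0 i1 * Equiv.swap i0 i2 with hτ
  set τ' := Equiv.swap i0 i1 * Equiv.swap i0 i3 with hτ'
  have hcomm : τ * τ' ≠ τ' * τ := by
    intro h
    have := congrArg (fun f : Equiv.Perm (Fin k) => f i2) h
    simp [hτ, hτ', Equiv.swap_apply_def, n01, n02, n03, n12, n13, n23, n01.symm, n02.symm,
      n03.symm, n12.symm, n13.symm, n23.symm] at this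
  -- it suffices to find one nontrivial element
  suffices hmain : ∃ c, (1, 1, c) ∈ H ∧ c ≠ 1 by
    let N : Subgroup (Equiv.Perm (Fin k)) :=
      { carrier := {c | (1, 1, c) ∈ H}
        one_mem' := H.one_mem
        mul_mem' := fun {a b} ha hb => by simpa using H.mul_mem ha hb
        inv_mem' := fun {a} ha => by simpa using H.inv_mem ha }
    have hle : alternatingGroup (Fin k) ≤ N := by
      refine alt_le_of_normalized hk G N hgen ?_ ?_ hmain
      · intro c hc
        exact inG _ (cyc' _ _ _ (cyc' _ _ _ hc))
      · intro g hg c hc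
        obtain ⟨a, b, h⟩ := surj g hg
        have h := cyc' _ _ _ h
        have := H.mul_mem (H.mul_mem h hc) (H.inv_mem h)
        simpa [N] using this
    exact ⟨3, τ, Nat.prime_three, t1.isCycle, t1.card_support, hle t1.mem_alternatingGroup⟩
  by_contra hno
  push Not at hno
  -- elements of the form (1, b, c)
  have key : ∀ b c, (1, b, c) ∈ H → b = 1 ∧ c = 1 := by
    by_contra hne
    push Not at hne
    obtain ⟨b, c, hbc, hne⟩ := hne
    have hb : b ≠ 1 := by
      rintro rfl
      exact hne rfl (hno c hbc)
    have hc : c ≠ 1 := by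
      rintro rfl
      exact hb (hno b (cyc' _ _ _ (cyc' _ _ _ hbc)))
    let B : Subgroup (Equiv.Perm (Fin k)) :=
      { carrier := {b | ∃ c, (1, b, c) ∈ H}
        one_mem' := ⟨1, H.one_mem⟩
        mul_mem' := fun {a b} ⟨x, hx⟩ ⟨y, hy⟩ => ⟨x * y, by simpa using H.mul_mem hx hy⟩
        inv_mem' := fun {a} ⟨x, hx⟩ => ⟨x⁻¹, by simpa using H.inv_mem hx⟩ }
    let C : Subgroup (Equiv.Perm (Fin k)) :=
      { carrier := {c | ∃ b, (1, b, c) ∈ H}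
        one_mem' := ⟨1, H.one_mem⟩
        mul_mem' := fun {a b} ⟨x, hx⟩ ⟨y, hy⟩ => ⟨x * y, by simpa using H.mul_mem hx hy⟩
        inv_mem' := fun {a} ⟨x, hx⟩ => ⟨x⁻¹, by simpa using H.inv_mem hx⟩ }
    have hB : alternatingGroup (Fin k) ≤ B := by
      refine alt_le_of_normalized hk G B hgen ?_ ?_ ⟨b, ⟨c, hbc⟩, hb⟩
      · rintro x ⟨y, hy⟩
        exact inG _ (cyc' _ _ _ hy)
      · rintro g hg x ⟨y, hy⟩
        obtain ⟨u, v, h⟩ := surj g hg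
        have h := cyc' _ _ _ (cyc' _ _ _ h)
        have := H.mul_mem (H.mul_mem h hy) (H.inv_mem h)
        exact ⟨u * y * u⁻¹, by simpa using this⟩
    have hC : alternatingGroup (Fin k) ≤ C := by
      refine alt_le_of_normalized hk G C hgen ?_ ?_ ⟨c, ⟨b, hbc⟩, hc⟩
      · rintro x ⟨y, hy⟩
        exact inG _ (cyc' _ _ _ (cyc' _ _ _ hy))
      · rintro g hg x ⟨y, hy⟩
        obtain ⟨u, v, h⟩ := surj g hg
        have h := cyc' _ _ _ h
        have := H.mul_mem (H.mul_mem h hy) (H.inv_mem h)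
        exact ⟨v * y * v⁻¹, by simpa using this⟩
    obtain ⟨x, hx⟩ := hB t1.mem_alternatingGroup
    obtain ⟨y, hy⟩ := hC t2.mem_alternatingGroup
    have hy := cyc' _ _ _ hy
    have h := H.mul_mem (H.mul_mem hx hy) (H.mul_mem (H.inv_mem hx) (H.inv_mem hy))
    have h' : (1, τ * τ' * (τ⁻¹ * τ'⁻¹), 1) ∈ H := by simpa using h
    have := hno _ (cyc' _ _ _ (cyc' _ _ _ h'))
    apply hcomm
    rw [← mul_inv_rev, mul_inv_eq_one] at this
    exact this
  have hdvd : ∀ a b c, (a, b, c) ∈ H → orderOf b ∣ orderOf a ∧ orderOf c ∣ orderOf a := by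
    intro a b c h
    have := H.pow_mem h (orderOf a)
    simp only [Prod.pow_mk, pow_orderOf_eq_one] at this
    obtain ⟨h1, h2⟩ := key _ _ this
    exact ⟨orderOf_dvd_of_pow_eq_one h1, orderOf_dvd_of_pow_eq_one h2⟩
  have d0 := hdvd _ _ _ g0
  have d1 := hdvd _ _ _ g1
  have d2 := hdvd _ _ _ g2
  exact horder ⟨Nat.dvd_antisymm d1.2 d0.1, Nat.dvd_antisymm d2.2 d1.1⟩
end
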